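/- Let n ≥ 1 be an integer, θ ∈ (0, π/2), 1 ≤ k ≤ n, and let φ : C_θ → (0,∞) be continuous. There exists a constant C > 0 (depending only on n, k, θ and φ) such that: for every smooth capillary function s on C_θ with τ[s] > 0 satisfying ∫_{C_θ} s(ζ) ζ_i dσ(ζ) = 0 for all i = 1,…,n and σ_k(τ[s])(ζ) = φ(ζ) for all ζ ∈ C_θ, one has 0 < s(ζ) ≤ C for all ζ ∈ C_θ. Moreover, in the case k = n there exist constants c, C' > 0 (depending only on n, θ and φ) such that every such s admits a vector w ∈ ℝ^{n+1} with ⟨w, E_{n+1}⟩ = 0 and c ≤ s(ζ) − ⟨ζ, w⟩ ≤ C' for all ζ ∈ C_θ. -/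

import Mathlib

open MeasureTheory Real Set
open scoped RealInnerProductSpace

noncomputable section

abbrev V (n : ℕ) := EuclideanSpace ℝ (Fin (n + 1))

/-- The vertical unit vector `E_{n+1}`. -/
def Etop (n : ℕ) : V n := EuclideanSpace.single (Fin.last n) 1

/-- The spherical cap `S^n_θ`. -/
def sphCap (n : ℕ) (θ : ℝ) : Set (V n) :=
  {u | ‖u‖ = 1 ∧ Real.cos θ ≤ u (Fin.last n)}

/-- The boundary circle `∂S^n_θ`. -/
def sphCapBdry (n : ℕ) (θ : ℝ) : Set (V n) :=
  {u | ‖u‖ = 1 ∧ u (Fin.last n) = Real.cos θ}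

/-- The capillary cap `C_θ`. -/
def capCap (n : ℕ) (θ : ℝ) : Set (V n) :=
  {ζ | 0 ≤ ζ (Fin.last n) ∧ ‖ζ + Real.cos θ • Etop n‖ = 1}

/-- The open cone over `S^n_θ`. -/
def coneCap (n : ℕ) (θ : ℝ) : Set (V n) :=
  {x | ∃ l : ℝ, 0 < l ∧ ∃ u ∈ sphCap n θ, x = l • u}

/-- `G` is a positively 1-homogeneous extension of `g : C_θ → ℝ` which is `C^m` on an
open neighborhood of the cone over `S^n_θ`. -/
def IsHomExt (n : ℕ) (θ : ℝ) (m : ℕ∞) (g G : V n → ℝ) : Prop :=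
  (∃ U : Set (V n), IsOpen U ∧ coneCap n θ ⊆ U ∧ ContDiffOn ℝ m G U) ∧
  (∀ l : ℝ, 0 < l → ∀ u ∈ sphCap n θ, G (l • u) = l * G u) ∧
  (∀ ζ ∈ capCap n θ, G (ζ + Real.cos θ • Etop n) = g ζ)

/-- The Hessian of `G` at `u` as a quadratic/bilinear form. -/
def hessQ (n : ℕ) (G : V n → ℝ) (u v w : V n) : ℝ :=
  fderiv ℝ (fderiv ℝ G) u v w

/-- The Hessian matrix `D²G(u)` in the standard coordinates. -/
def hessM (n : ℕ) (G : V n → ℝ) (u : V n) : Matrix (Fin (n + 1)) (Fin (n + 1)) ℝ :=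
  fun i j => fderiv ℝ (fderiv ℝ G) u (EuclideanSpace.single i 1) (EuclideanSpace.single j 1)

/-- `σ_j` of the eigenvalues of `D²G(u)` (via characteristic polynomial coefficients). -/
def sigmaElem (n : ℕ) (j : ℕ) (G : V n → ℝ) (u : V n) : ℝ :=
  (-1 : ℝ) ^ j * ((hessM n G u).charpoly.coeff (n + 1 - j))

/-- `τ[g] ≥ 0` : the Hessian of the extension is positive semidefinite on `S^n_θ`. -/
def TauNonneg (n : ℕ) (θ : ℝ) (G : V n → ℝ) : Prop :=
  ∀ u ∈ sphCap n θ, ∀ v : V n, 0 ≤ hessQ n G u v v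

/-- `τ[g] > 0`. -/
def TauPos (n : ℕ) (θ : ℝ) (G : V n → ℝ) : Prop :=
  TauNonneg n θ G ∧
  ∀ u ∈ sphCap n θ, ∀ v : V n, v ≠ 0 → ⟪v, u⟫ = 0 → 0 < hessQ n G u v v

/-- Capillary (Robin) boundary condition: `∂_{n+1}G = 0` on `∂S^n_θ`. -/
def IsCapillaryF (n : ℕ) (θ : ℝ) (G : V n → ℝ) : Prop :=
  ∀ u ∈ sphCapBdry n θ, fderiv ℝ G u (Etop n) = 0

/-- Reflection negating the horizontal coordinates. -/
def horizNeg (n : ℕ) (ζ : V n) : V n := (2 * ζ (Fin.last n)) • Etop n - ζ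

/-- Support function of a set. -/
def suppFn (n : ℕ) (K : Set (V n)) (u : V n) : ℝ := sSup ((fun y => ⟪u, y⟫) '' K)

/-- Relative interior (within the hyperplane `{x_{n+1}=0}`) of the base `K ∩ {x_{n+1}=0}`. -/
def relintBase (n : ℕ) (K : Set (V n)) : Set (V n) :=
  {x | x (Fin.last n) = 0 ∧ ∃ ε > 0, ∀ y : V n, y (Fin.last n) = 0 → ‖y - x‖ < ε → y ∈ K}

/-- A `θ`-capillary convex body. -/
def IsCapBody (n : ℕ) (θ : ℝ) (K : Set (V n)) : Prop :=
  IsCompact K ∧ Convex ℝ K ∧ (interior K).Nonempty ∧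
  (∀ x ∈ K, 0 ≤ x (Fin.last n)) ∧
  (∀ x ∈ K, 0 < x (Fin.last n) → ∀ u : V n, ‖u‖ = 1 → ⟪u, x⟫ = suppFn n K u →
    Real.cos θ ≤ u (Fin.last n)) ∧
  (∀ v : V n, ‖v‖ = 1 → v (Fin.last n) = 0 →
    suppFn n K (Real.sin θ • v + Real.cos θ • Etop n) = Real.sin θ * suppFn n K v) ∧
  (relintBase n K).Nonempty

/-- `ψ` is one of `x²`, `x^p (p<0)`, `-log x`. -/
def PsiOK (ψ : ℝ → ℝ) : Prop :=
  (ψ = fun x : ℝ => x ^ 2) ∨ (∃ p : ℝ, p < 0 ∧ ψ = fun x : ℝ => x ^ p) ∨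
    (ψ = fun x : ℝ => -Real.log x)

/-- A function on the closed ball of radius `R` about the origin that is strictly convex in the
interior and satisfies the Robin condition `R ∂_ν F = F` on the boundary sphere. -/
structure IsRobinPotential {E : Type*} [NormedAddCommGroup E] [InnerProductSpace ℝ E]
    (R : ℝ) (F : E → ℝ) : Prop where
  radius_pos : 0 < R
  smooth : ∃ U : Set E, IsOpen U ∧ Metric.closedBall 0 R ⊆ U ∧ ContDiffOn ℝ 2 F U
  hess_pos : ∀ z : E, ‖z‖ < R → ∀ v : E, v ≠ 0 → 0 < fderiv ℝ (fderiv ℝ F) z v v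
  robin : ∀ z : E, ‖z‖ = R → fderiv ℝ F z z = F z

namespace IsRobinPotential

variable {E : Type*} [NormedAddCommGroup E] [InnerProductSpace ℝ E] {R : ℝ} {F : E → ℝ}

lemma contDiffAt (hF : IsRobinPotential R F) {z : E} (hz : ‖z‖ ≤ R) : ContDiffAt ℝ 2 F z := by
  obtain ⟨U, hU, hsub, hc⟩ := hF.smooth
  exact hc.contDiffAt (hU.mem_nhds (hsub (by simpa using hz)))

lemma differentiableAt (hF : IsRobinPotential R F) {z : E} (hz : ‖z‖ ≤ R) :
    DifferentiableAt ℝ F z :=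
  (hF.contDiffAt hz).differentiableAt (by norm_num)

lemma contDiffAt_fderiv (hF : IsRobinPotential R F) {z : E} (hz : ‖z‖ ≤ R) :
    ContDiffAt ℝ 1 (fderiv ℝ F) z :=
  (hF.contDiffAt hz).fderiv_right (by norm_num)

lemma differentiableAt_fderiv (hF : IsRobinPotential R F) {z : E} (hz : ‖z‖ ≤ R) :
    DifferentiableAt ℝ (fderiv ℝ F) z :=
  (hF.contDiffAt_fderiv hz).differentiableAt (by norm_num)

/-- Strict convexity: the graph lies above its tangent planes. -/
lemma lt_of_ne (hF : IsRobinPotential R F) {z w : E} (hz : ‖z‖ ≤ R) (hw : ‖w‖ ≤ R)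
    (hne : z ≠ w) : F z + fderiv ℝ F z (w - z) < F w := by
  set d := w - z with hd
  have hd0 : d ≠ 0 := sub_ne_zero.mpr hne.symm
  have hmem : ∀ t ∈ Icc (0 : ℝ) 1, ‖z + t • d‖ ≤ R := by
    intro t ht
    have := (convex_closedBall (0 : E) R).add_smul_sub_mem
      (by simpa using hz : z ∈ Metric.closedBall 0 R) (by simpa using hw) ht
    simpa using this
  have hmem' : ∀ t ∈ Ioo (0 : ℝ) 1, ‖z + t • d‖ < R := by
    intro t ht
    have := (strictConvex_closedBall ℝ (0 : E) R)
      (by simpa using hz : z ∈ Metric.closedBall 0 R) (by simpa using hw) hne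
      (sub_pos.mpr ht.2) ht.1 (by ring)
    rw [interior_closedBall _ hF.radius_pos.ne'] at this
    have h2 : (1 - t) • z + t • w = z + t • d := by rw [hd, sub_smul, smul_sub]; module
    rw [h2] at this
    simpa using this
  have hline : ∀ t : ℝ, HasDerivAt (fun t : ℝ => z + t • d) d t := by
    intro t
    simpa using ((hasDerivAt_id t).smul_const d).const_add z
  have h1 : ∀ t ∈ Icc (0 : ℝ) 1,
      HasDerivAt (fun t : ℝ => F (z + t • d)) (fderiv ℝ F (z + t • d) d) t := by
    intro t ht
    exact (hF.differentiableAt (hmem t ht)).hasFDerivAt.comp_hasDerivAt t (hline t)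
  have h2 : ∀ t ∈ Icc (0 : ℝ) 1, HasDerivAt (fun t : ℝ => fderiv ℝ F (z + t • d) d)
      (fderiv ℝ (fderiv ℝ F) (z + t • d) d d) t := by
    intro t ht
    have := (hF.differentiableAt_fderiv (hmem t ht)).hasFDerivAt.comp_hasDerivAt t (hline t)
    simpa using this.clm_apply (hasDerivAt_const t d)
  have hmono : StrictMonoOn (fun t : ℝ => fderiv ℝ F (z + t • d) d) (Icc 0 1) := by
    refine strictMonoOn_of_deriv_pos (convex_Icc 0 1)
      (fun t ht => (h2 t ht).continuousAt.continuousWithinAt) ?_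
    intro t ht
    rw [interior_Icc] at ht
    rw [(h2 t (Ioo_subset_Icc_self ht)).deriv]
    exact hF.hess_pos _ (hmem' t ht) d hd0
  obtain ⟨c, hc, hc'⟩ := exists_hasDerivAt_eq_slope (fun t : ℝ => F (z + t • d)) _ one_pos
    (fun t ht => (h1 t ht).continuousAt.continuousWithinAt)
    (fun t ht => h1 t (Ioo_subset_Icc_self ht))
  have h3 := hmono (left_mem_Icc.mpr zero_le_one) (Ioo_subset_Icc_self hc) hc.1
  simp only [zero_smul, add_zero, one_smul, sub_zero, div_one] at hc' h3
  have h4 : z + d = w := by rw [hd]; abel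
  rw [h4] at hc'
  linarith

lemma le_of_tangent (hF : IsRobinPotential R F) {z w : E} (hz : ‖z‖ ≤ R) (hw : ‖w‖ ≤ R) :
    F z + fderiv ℝ F z (w - z) ≤ F w := by
  rcases eq_or_ne z w with rfl | h
  · simp
  · exact (hF.lt_of_ne hz hw h).le

lemma norm_zero_le (hF : IsRobinPotential R F) : ‖(0 : E)‖ ≤ R := by
  simpa using hF.radius_pos.le

/-- The value at a boundary point dominates the linear functionals given by boundary gradients. -/
lemma fderiv_le_of_sphere (hF : IsRobinPotential R F) {z w : E} (hz : ‖z‖ = R) (hw : ‖w‖ ≤ R) :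
    fderiv ℝ F z w ≤ F w := by
  have := hF.le_of_tangent hz.le hw
  rw [map_sub, hF.robin z hz] at this
  linarith

/-- The height function `F - z · DF` is at most `F 0`. -/
lemma sub_fderiv_le (hF : IsRobinPotential R F) {z : E} (hz : ‖z‖ ≤ R) :
    F z - fderiv ℝ F z z ≤ F 0 := by
  have := hF.le_of_tangent hz hF.norm_zero_le
  rw [zero_sub, map_neg] at this
  linarith

lemma fderiv_lt_of_mem_ball [Nontrivial E] (hF : IsRobinPotential R F) {z : E} (hz : ‖z‖ < R) :
    fderiv ℝ F z z < F z := by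
  rcases eq_or_ne z 0 with rfl | h0
  · obtain ⟨w, hw⟩ := exists_norm_eq E hF.radius_pos.le
    have hne : w ≠ 0 := by
      rintro rfl
      simp only [norm_zero] at hw
      exact hF.radius_pos.ne hw
    have := hF.lt_of_ne hw.le hF.norm_zero_le hne
    rw [zero_sub, map_neg, hF.robin w hw] at this
    simpa using this
  · have hn : 0 < ‖z‖ := norm_pos_iff.mpr h0
    set l := R / ‖z‖ with hl
    have hl1 : 1 < l := (one_lt_div hn).mpr hz
    have hnorm : ‖l • z‖ = R := by
      rw [norm_smul, norm_of_nonneg (by positivity), hl, div_mul_cancel₀ _ hn.ne']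
    have hne : z ≠ l • z := by
      intro h
      rw [← h] at hnorm
      exact hz.ne hnorm
    have h1 := hF.lt_of_ne hz.le hnorm.le hne
    have h2 := hF.fderiv_le_of_sphere hnorm hz.le
    have h3 := hF.robin _ hnorm
    rw [map_smul, smul_eq_mul] at h3
    rw [map_sub, map_smul, smul_eq_mul] at h1
    have h4 : F (l • z) ≤ l * F z := by
      rw [← h3]; exact mul_le_mul_of_nonneg_left h2 (by linarith)
    nlinarith

/-- Gradients at interior points lie strictly inside the base. -/
lemma fderiv_lt_of_sphere [Nontrivial E] (hF : IsRobinPotential R F) {z w : E} (hz : ‖z‖ < R)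
    (hw : ‖w‖ = R) : fderiv ℝ F z w < F w := by
  have h1 := hF.le_of_tangent hz.le hw.le
  have h2 := hF.fderiv_lt_of_mem_ball hz
  rw [map_sub] at h1
  linarith

lemma exists_pos_smul_mem_sphere (hR : 0 < R) {z : E} (h0 : z ≠ 0) :
    ∃ w : E, ‖w‖ = R ∧ z = (‖z‖ / R) • w := by
  have hn : 0 < ‖z‖ := norm_pos_iff.mpr h0
  refine ⟨(R / ‖z‖) • z, ?_, ?_⟩
  · rw [norm_smul, norm_of_nonneg (by positivity), div_mul_cancel₀ _ hn.ne']
  · rw [smul_smul, div_mul_div_comm, mul_comm, div_self (by positivity), one_smul]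

/-- `F` dominates the 1-homogeneous extension of its boundary values. -/
lemma smul_le (hF : IsRobinPotential R F) {w : E} (hw : ‖w‖ = R) {t : ℝ} (ht : 0 ≤ t)
    (ht1 : t ≤ 1) : t * F w ≤ F (t • w) := by
  have h := hF.fderiv_le_of_sphere hw (w := t • w) (by
    rw [norm_smul, norm_of_nonneg ht, hw]
    nlinarith [hF.radius_pos])
  rwa [map_smul, hF.robin w hw, smul_eq_mul] at h

lemma pos_of_sphere_pos [Nontrivial E] (hF : IsRobinPotential R F)
    (hpos : ∀ w : E, ‖w‖ = R → 0 < F w) {z : E} (hz : ‖z‖ ≤ R) : 0 < F z := by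
  have hR := hF.radius_pos
  rcases eq_or_ne z 0 with rfl | h0
  · simpa using hF.fderiv_lt_of_mem_ball (z := 0) (by simpa using hR)
  · obtain ⟨w, hw, hzw⟩ := exists_pos_smul_mem_sphere hR h0
    have hn : 0 < ‖z‖ := norm_pos_iff.mpr h0
    have h1 := hF.smul_le hw (t := ‖z‖ / R) (by positivity) ((div_le_one hR).mpr hz)
    rw [← hzw] at h1
    have := mul_pos (div_pos hn hR) (hpos w hw)
    linarith

lemma le_add_of_sphere_le [Nontrivial E] (hF : IsRobinPotential R F) {L : ℝ} (hL : 0 ≤ L)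
    (hle : ∀ w : E, ‖w‖ = R → F w ≤ L) {z : E} (hz : ‖z‖ ≤ R) : F z ≤ F 0 + L := by
  have hR := hF.radius_pos
  rcases eq_or_ne z 0 with rfl | h0
  · linarith
  · obtain ⟨w, hw, hzw⟩ := exists_pos_smul_mem_sphere hR h0
    have hn : 0 < ‖z‖ := norm_pos_iff.mpr h0
    rcases hz.lt_or_eq with hlt | heq
    · have h1 := hF.sub_fderiv_le hz
      have h2 := hF.fderiv_lt_of_sphere hlt hw
      have h3 : fderiv ℝ F z z = ‖z‖ / R * fderiv ℝ F z w := by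
        rw [← smul_eq_mul, ← map_smul, ← hzw]
      have h4 : ‖z‖ / R * fderiv ℝ F z w ≤ ‖z‖ / R * L :=
        mul_le_mul_of_nonneg_left (by linarith [hle w hw]) (by positivity)
      have h5 : ‖z‖ / R * L ≤ L := mul_le_of_le_one_left hL ((div_le_one hR).mpr hz)
      linarith
    · have := hle z heq
      have h6 := hF.fderiv_lt_of_mem_ball (z := 0) (by simpa using hR)
      rw [map_zero] at h6
      linarith

/-- The value at the centre is at most the mean of the values at antipodal boundary points. -/
lemma two_mul_zero_le (hF : IsRobinPotential R F) {w : E} (hw : ‖w‖ = R) :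
    2 * F 0 ≤ F w + F (-w) := by
  have h1 := hF.le_of_tangent hF.norm_zero_le hw.le
  have h2 := hF.le_of_tangent hF.norm_zero_le (w := -w) (by rw [norm_neg, hw])
  rw [sub_zero] at h1 h2
  rw [map_neg] at h2
  linarith

end IsRobinPotential

section Gradient

variable {d : ℕ}

/-- The gradient of a function on Euclidean space, in coordinates. -/
def euclideanGrad (F : EuclideanSpace ℝ (Fin d) → ℝ) (z : EuclideanSpace ℝ (Fin d)) :
    EuclideanSpace ℝ (Fin d) :=
  WithLp.toLp 2 fun i => fderiv ℝ F z (EuclideanSpace.single i 1)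

/-- The Hessian matrix of a function on Euclidean space. -/
def hessianMatrix (F : EuclideanSpace ℝ (Fin d) → ℝ) (z : EuclideanSpace ℝ (Fin d)) :
    Matrix (Fin d) (Fin d) ℝ :=
  fun i j => fderiv ℝ (fderiv ℝ F) z (EuclideanSpace.single i 1) (EuclideanSpace.single j 1)

lemma sum_smul_single_eq (v : EuclideanSpace ℝ (Fin d)) :
    ∑ i, v i • EuclideanSpace.single i (1 : ℝ) = v := by
  simpa [EuclideanSpace.basisFun_apply] using (EuclideanSpace.basisFun (Fin d) ℝ).sum_repr v

lemma inner_euclideanGrad (F : EuclideanSpace ℝ (Fin d) → ℝ) (z v : EuclideanSpace ℝ (Fin d)) :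
    ⟪euclideanGrad F z, v⟫ = fderiv ℝ F z v := by
  conv_rhs => rw [← sum_smul_single_eq v]
  simp [euclideanGrad, PiLp.inner_apply]

lemma hasFDerivAt_euclideanGrad {F : EuclideanSpace ℝ (Fin d) → ℝ}
    {z : EuclideanSpace ℝ (Fin d)} (h : DifferentiableAt ℝ (fderiv ℝ F) z) :
    HasFDerivAt (euclideanGrad F)
      (LinearMap.toContinuousLinearMap
        (Matrix.toEuclideanLin (hessianMatrix F z).transpose)) z := by
  rw [← hasFDerivWithinAt_univ, hasFDerivWithinAt_euclidean]
  intro i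
  have h1 := h.hasFDerivAt.clm_apply
    (hasFDerivAt_const (EuclideanSpace.single i (1 : ℝ) : EuclideanSpace ℝ (Fin d)) z)
  rw [hasFDerivWithinAt_univ]
  refine h1.congr_fderiv ?_
  ext v
  simp only [ContinuousLinearMap.comp_zero, zero_add, ContinuousLinearMap.flip_apply,
    ContinuousLinearMap.comp_apply]
  conv_lhs => rw [← sum_smul_single_eq v]
  simp [Matrix.toEuclideanLin, Matrix.mulVec, dotProduct, hessianMatrix, mul_comm]

lemma det_fderiv_euclideanGrad (F : EuclideanSpace ℝ (Fin d) → ℝ)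
    (z : EuclideanSpace ℝ (Fin d)) :
    (LinearMap.toContinuousLinearMap
      (Matrix.toEuclideanLin (hessianMatrix F z).transpose)).det = (hessianMatrix F z).det := by
  rw [ContinuousLinearMap.det, LinearMap.coe_toContinuousLinearMap,
    Matrix.toEuclideanLin_eq_toLin_orthonormal, LinearMap.det_toLin, Matrix.det_transpose]

/-- The convex set cut out by the boundary values of `F` on the sphere of radius `R`. -/
def wulffBase (R : ℝ) (F : EuclideanSpace ℝ (Fin d) → ℝ) : Set (EuclideanSpace ℝ (Fin d)) :=
  {p | ∀ w : EuclideanSpace ℝ (Fin d), ‖w‖ = R → ⟪p, w⟫ < F w}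

namespace IsRobinPotential

variable {R : ℝ} {F : EuclideanSpace ℝ (Fin d) → ℝ}

lemma injOn_euclideanGrad (hF : IsRobinPotential R F) :
    InjOn (euclideanGrad F) (Metric.ball 0 R) := by
  intro z hz w hw h
  by_contra hne
  have hz' : ‖z‖ ≤ R := by simpa using (mem_ball_zero_iff.mp hz).le
  have hw' : ‖w‖ ≤ R := by simpa using (mem_ball_zero_iff.mp hw).le
  have h1 := hF.lt_of_ne hz' hw' hne
  have h2 := hF.lt_of_ne hw' hz' (Ne.symm hne)
  rw [← inner_euclideanGrad] at h1 h2
  rw [← h, inner_sub_right] at h2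
  rw [inner_sub_right] at h1
  linarith

lemma euclideanGrad_mem [Nontrivial (EuclideanSpace ℝ (Fin d))] (hF : IsRobinPotential R F)
    {z : EuclideanSpace ℝ (Fin d)} (hz : ‖z‖ < R) : euclideanGrad F z ∈ wulffBase R F := by
  intro w hw
  rw [inner_euclideanGrad]
  exact hF.fderiv_lt_of_sphere hz hw

lemma exists_euclideanGrad_eq (hF : IsRobinPotential R F) {p : EuclideanSpace ℝ (Fin d)}
    (hp : p ∈ wulffBase R F) : ∃ y, ‖y‖ < R ∧ euclideanGrad F y = p := by
  have hg : ∀ y : EuclideanSpace ℝ (Fin d), ‖y‖ ≤ R →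
      HasFDerivAt (fun z => F z - ⟪p, z⟫) (fderiv ℝ F y - innerSL ℝ p) y := by
    intro y hy
    exact (hF.differentiableAt hy).hasFDerivAt.sub (innerSL ℝ p).hasFDerivAt
  obtain ⟨y, hy, hmin⟩ := (isCompact_closedBall (0 : EuclideanSpace ℝ (Fin d)) R).exists_isMinOn
    ⟨0, by simpa using hF.radius_pos.le⟩
    (fun y hy => (hg y (by simpa using hy)).continuousAt.continuousWithinAt)
  have hy' : ‖y‖ ≤ R := by simpa using hy
  rcases hy'.lt_or_eq with hlt | heq
  · refine ⟨y, hlt, ?_⟩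
    have hloc : IsLocalMin (fun z => F z - ⟪p, z⟫) y :=
      hmin.isLocalMin (Filter.mem_of_superset
        (Metric.isOpen_ball.mem_nhds (by simpa using hlt)) Metric.ball_subset_closedBall)
    have h0 := hloc.hasFDerivAt_eq_zero (hg y hy')
    refine ext_inner_right ℝ fun v => ?_
    rw [inner_euclideanGrad, sub_eq_zero.mp h0, innerSL_apply_apply]
  · exfalso
    have hcone : (0 : EuclideanSpace ℝ (Fin d)) - y ∈
        posTangentConeAt (Metric.closedBall 0 R) y :=
      sub_mem_posTangentConeAt_of_segment_subset
        ((convex_closedBall _ _).segment_subset hy (by simpa using hF.radius_pos.le))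
    have h1 := hmin.localize.hasFDerivWithinAt_nonneg (hg y hy').hasFDerivWithinAt hcone
    rw [zero_sub, map_neg, sub_apply, hF.robin y heq,
      innerSL_apply_apply] at h1
    linarith [hp y heq]

lemma hasFDerivWithinAt_grad (hF : IsRobinPotential R F) {s : Set (EuclideanSpace ℝ (Fin d))}
    (hs : s ⊆ Metric.ball 0 R) : ∀ z ∈ s, HasFDerivWithinAt (euclideanGrad F)
      (LinearMap.toContinuousLinearMap (Matrix.toEuclideanLin (hessianMatrix F z).transpose)) s z :=
  fun _ hz => (hasFDerivAt_euclideanGrad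
    (hF.differentiableAt_fderiv (mem_ball_zero_iff.mp (hs hz)).le)).hasFDerivWithinAt

lemma volume_image_grad_le (hF : IsRobinPotential R F) {s : Set (EuclideanSpace ℝ (Fin d))}
    (hs : s ⊆ Metric.ball 0 R) (hm : MeasurableSet s) {hi : ℝ}
    (hhi : ∀ z ∈ s, |(hessianMatrix F z).det| ≤ hi) :
    volume (euclideanGrad F '' s) ≤ ENNReal.ofReal hi * volume s := by
  rw [← lintegral_abs_det_fderiv_eq_addHaar_image volume hm (hF.hasFDerivWithinAt_grad hs)
    (hF.injOn_euclideanGrad.mono hs), ← setLIntegral_const]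
  refine setLIntegral_mono' hm fun z hz => ENNReal.ofReal_le_ofReal ?_
  rw [det_fderiv_euclideanGrad]
  exact hhi z hz

lemma le_volume_image_grad (hF : IsRobinPotential R F) {s : Set (EuclideanSpace ℝ (Fin d))}
    (hs : s ⊆ Metric.ball 0 R) (hm : MeasurableSet s) {lo : ℝ}
    (hlo : ∀ z ∈ s, lo ≤ (hessianMatrix F z).det) :
    ENNReal.ofReal lo * volume s ≤ volume (euclideanGrad F '' s) := by
  rw [← lintegral_abs_det_fderiv_eq_addHaar_image volume hm (hF.hasFDerivWithinAt_grad hs)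
    (hF.injOn_euclideanGrad.mono hs), ← setLIntegral_const]
  refine setLIntegral_mono' hm fun z hz => ENNReal.ofReal_le_ofReal ?_
  rw [det_fderiv_euclideanGrad]
  exact (hlo z hz).trans (le_abs_self _)

lemma measurableSet_image_grad (hF : IsRobinPotential R F)
    {s : Set (EuclideanSpace ℝ (Fin d))} (hs : s ⊆ Metric.ball 0 R) (hm : MeasurableSet s) :
    MeasurableSet (euclideanGrad F '' s) :=
  measurable_image_of_fderivWithin hm (hF.hasFDerivWithinAt_grad hs)
    (hF.injOn_euclideanGrad.mono hs)

lemma wulffBase_subset_image (hF : IsRobinPotential R F) :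
    wulffBase R F ⊆ euclideanGrad F '' Metric.ball 0 R := by
  intro p hp
  obtain ⟨y, hy, h⟩ := hF.exists_euclideanGrad_eq hp
  exact ⟨y, by simpa using hy, h⟩

open scoped Pointwise in
/-- The gradients over a half-cap lie in a thin shell of the base, so they occupy little volume. -/
lemma volume_shell_le [Nontrivial (EuclideanSpace ℝ (Fin d))] (hF : IsRobinPotential R F)
    (hpos : ∀ w : EuclideanSpace ℝ (Fin d), ‖w‖ = R → 0 < F w)
    {e : EuclideanSpace ℝ (Fin d)} (he : ‖e‖ = 1) {L : ℝ} (hL : 0 < L)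
    (hLe : ∀ y : EuclideanSpace ℝ (Fin d), ‖y‖ = R → L * ⟪e, y⟫ ≤ F y)
    (hfin : volume (wulffBase R F) ≠ ⊤) {lo : ℝ} (hlo0 : 0 ≤ lo)
    (hlo : ∀ z : EuclideanSpace ℝ (Fin d), ‖z‖ < R → lo ≤ (hessianMatrix F z).det) :
    lo * volume.real (Metric.ball (0 : EuclideanSpace ℝ (Fin d)) (R / 4)) ≤
      d * (2 * F 0 / (L * R)) * volume.real (wulffBase R F) := by
  have hR := hF.radius_pos
  have hT : 0 < F 0 := hF.pos_of_sphere_pos hpos hF.norm_zero_le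
  set A : Set (EuclideanSpace ℝ (Fin d)) := Metric.ball ((3 * R / 4) • e) (R / 4) with hA
  have hAe : ∀ y ∈ A, R / 2 < ⟪e, y⟫ := by
    intro y hy
    have h1 : ‖y - (3 * R / 4) • e‖ < R / 4 := by simpa [hA, dist_eq_norm] using hy
    have h2 := abs_real_inner_le_norm e (y - (3 * R / 4) • e)
    rw [he, one_mul, inner_sub_right, inner_smul_right, real_inner_self_eq_norm_sq, he] at h2
    have := (abs_le.mp (h2.trans h1.le)).1
    have h3 := (abs_lt.mp (h2.trans_lt h1)).1
    linarith
  have hAs : A ⊆ Metric.ball 0 R := by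
    intro y hy
    have h1 : ‖y - (3 * R / 4) • e‖ < R / 4 := by simpa [hA, dist_eq_norm] using hy
    have h2 := norm_add_le (y - (3 * R / 4) • e) ((3 * R / 4) • e)
    rw [sub_add_cancel, norm_smul, he, norm_of_nonneg (by positivity)] at h2
    rw [mem_ball_zero_iff]
    linarith
  have hsubQ : euclideanGrad F '' A ⊆ wulffBase R F := by
    rintro _ ⟨y, hy, rfl⟩
    exact hF.euclideanGrad_mem (by simpa using hAs hy)
  set η := 2 * F 0 / (L * R) with hη
  have hη0 : 0 < η := by positivity
  have hvolA : volume A = volume (Metric.ball (0 : EuclideanSpace ℝ (Fin d)) (R / 4)) :=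
    Measure.addHaar_ball_center _ _ _
  have hlow := hF.le_volume_image_grad hAs measurableSet_ball
    (fun z hz => hlo z (by simpa using hAs hz))
  rw [hvolA] at hlow
  have hlow' : lo * volume.real (Metric.ball (0 : EuclideanSpace ℝ (Fin d)) (R / 4)) ≤
      volume.real (euclideanGrad F '' A) := by
    have := ENNReal.toReal_mono (measure_ne_top_of_subset hsubQ hfin) hlow
    rwa [ENNReal.toReal_mul, ENNReal.toReal_ofReal hlo0] at this
  refine hlow'.trans ?_
  have hd : (1 : ℝ) ≤ d := by
    rcases d with _ | d
    · exact absurd (inferInstance : Subsingleton (EuclideanSpace ℝ (Fin 0)))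
        (not_subsingleton _)
    · simp
  rcases le_or_gt 1 η with h1 | h1
  · refine (measureReal_mono hsubQ hfin).trans ?_
    refine le_mul_of_one_le_left measureReal_nonneg ?_
    nlinarith
  · set Q' : Set (EuclideanSpace ℝ (Fin d)) := (1 - η) • wulffBase R F with hQ'
    have hQ'sub : Q' ⊆ wulffBase R F := by
      rintro _ ⟨p, hp, rfl⟩ w hw
      simp only [inner_smul_left, RCLike.conj_to_real]
      have := hp w hw
      have := hpos w hw
      nlinarith
    have hdisj : Disjoint (euclideanGrad F '' A) Q' := by
      rw [Set.disjoint_left]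
      rintro _ ⟨y, hy, rfl⟩ ⟨p, hp, hpy⟩
      have hye := hAe y hy
      have hyR : ‖y‖ < R := by simpa using hAs hy
      have hy0 : y ≠ 0 := by
        rintro rfl
        rw [inner_zero_right] at hye
        linarith
      obtain ⟨w, hw, hyw⟩ := exists_pos_smul_mem_sphere hR hy0
      have hn : 0 < ‖y‖ := norm_pos_iff.mpr hy0
      set t := ‖y‖ / R with ht
      have ht0 : 0 < t := by positivity
      have ht1 : t ≤ 1 := (div_le_one hR).mpr hyR.le
      have h2 : fderiv ℝ F y y = (1 - η) * (t * ⟪p, w⟫) := by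
        rw [← inner_euclideanGrad, ← hpy]
        simp only [inner_smul_left, RCLike.conj_to_real]
        rw [show ⟪p, y⟫ = t * ⟪p, w⟫ by rw [hyw, inner_smul_right]]
      have h3 := hF.sub_fderiv_le hyR.le
      have h4 := hF.smul_le hw ht0.le ht1
      rw [← hyw] at h4
      have h5 : L * ⟪e, y⟫ ≤ t * F w := by
        rw [show ⟪e, y⟫ = t * ⟪e, w⟫ by rw [hyw, inner_smul_right]]
        have := mul_le_mul_of_nonneg_left (hLe w hw) ht0.le
        linarith
      have h6 : t * ⟪p, w⟫ ≤ t * F w := mul_le_mul_of_nonneg_left (hp w hw).le ht0.le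
      have h7 : (1 - η) * (t * ⟪p, w⟫) ≤ (1 - η) * (t * F w) :=
        mul_le_mul_of_nonneg_left h6 (by linarith)
      have h8 : η * (t * F w) ≤ F 0 := by linarith
      have h9 : L * (R / 2) < t * F w := lt_of_lt_of_le (mul_lt_mul_of_pos_left hye hL) h5
      have h10 : η * (L * (R / 2)) = F 0 := by rw [hη]; field_simp
      have := mul_lt_mul_of_pos_left h9 hη0
      linarith
    have hu := measure_union (μ := volume) hdisj.symm
      (hF.measurableSet_image_grad hAs measurableSet_ball)
    have hle : volume (Q' ∪ euclideanGrad F '' A) ≤ volume (wulffBase R F) :=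
      measure_mono (union_subset hQ'sub hsubQ)
    rw [hu] at hle
    have h1' := ENNReal.toReal_mono hfin hle
    rw [ENNReal.toReal_add (measure_ne_top_of_subset hQ'sub hfin)
      (measure_ne_top_of_subset hsubQ hfin), hQ', Measure.addHaar_smul, ENNReal.toReal_mul,
      ENNReal.toReal_ofReal (abs_nonneg _), finrank_euclideanSpace_fin,
      abs_of_nonneg (pow_nonneg (by linarith) _)] at h1'
    have h2 := one_add_mul_le_pow (a := -η) (by linarith) d
    have h3 : (0 : ℝ) ≤ volume.real (wulffBase R F) := measureReal_nonneg
    change (1 - η) ^ d * volume.real (wulffBase R F) + volume.real (euclideanGrad F '' A) ≤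
      volume.real (wulffBase R F) at h1'
    rw [← sub_eq_add_neg] at h2
    have := mul_le_mul_of_nonneg_right h2 h3
    nlinarith

end IsRobinPotential

end Gradient

section PrincipalMinors

open Matrix

variable {ι : Type*} [Fintype ι] [DecidableEq ι]

/-- The sum of the `k × k` principal minors, i.e. the `k`-th elementary symmetric polynomial of
the eigenvalues. -/
def principalMinorSum (k : ℕ) (H : Matrix ι ι ℝ) : ℝ :=
  ∑ s ∈ Finset.univ.powersetCard k,
    (H.submatrix (Subtype.val : s → ι) (Subtype.val : s → ι)).det

lemma neg_one_pow_mul_charpoly_coeff (H : Matrix ι ι ℝ) {k : ℕ} (hk : k ≤ Fintype.card ι) :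
    (-1) ^ k * H.charpoly.coeff (Fintype.card ι - k) = principalMinorSum k H := by
  rw [charpoly_coeff_eq_sum_minors _ _ hk, ← mul_assoc, ← mul_pow]
  simp [principalMinorSum]

lemma charpoly_neg_coeff (H : Matrix ι ι ℝ) {k : ℕ} (hk : k ≤ Fintype.card ι) :
    (-H).charpoly.coeff (Fintype.card ι - k) = principalMinorSum k H := by
  rw [charpoly_coeff_eq_sum_minors _ _ hk, principalMinorSum, Finset.mul_sum]
  refine Finset.sum_congr rfl fun s hs => ?_
  have h : (-H).submatrix (Subtype.val : s → ι) (Subtype.val : s → ι) =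
      -(H.submatrix Subtype.val Subtype.val) := rfl
  rw [h, det_neg, Fintype.card_coe, (Finset.mem_powersetCard.mp hs).2, ← mul_assoc, ← mul_pow]
  simp

lemma principalMinorSum_nonneg {H : Matrix ι ι ℝ} (hH : H.PosSemidef) (k : ℕ) :
    0 ≤ principalMinorSum k H :=
  Finset.sum_nonneg fun _ _ => (hH.submatrix _).det_nonneg

lemma det_submatrix_le_principalMinorSum {H : Matrix ι ι ℝ} (hH : H.PosSemidef) {k : ℕ}
    (f : Fin k ↪ ι) : (H.submatrix f f).det ≤ principalMinorSum k H := by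
  set s : Finset ι := Finset.univ.map f with hs
  have hmem : ∀ i : Fin k, f i ∈ s := fun i => by simp [hs]
  have hcard : s.card = k := by simp [hs]
  let e : Fin k ≃ s := Equiv.ofBijective (fun i => ⟨f i, hmem i⟩)
    ((Fintype.bijective_iff_injective_and_card _).mpr
      ⟨fun i j h => f.injective (by simpa using h), by simp [hcard]⟩)
  have h1 : (H.submatrix f f).det =
      (H.submatrix (Subtype.val : s → ι) (Subtype.val : s → ι)).det := by
    rw [← det_submatrix_equiv_self e]
    rfl
  rw [h1]
  exact Finset.single_le_sum
    (f := fun s : Finset ι => (H.submatrix (Subtype.val : s → ι) (Subtype.val : s → ι)).det)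
    (fun _ _ => (hH.submatrix _).det_nonneg)
    (Finset.mem_powersetCard.mpr ⟨Finset.subset_univ _, hcard⟩)

/-- `det (H + t) ≥ σ_k(H) t^{N-k}` for a positive semidefinite `N × N` matrix. -/
lemma principalMinorSum_mul_pow_le_det {H : Matrix ι ι ℝ} (hH : H.PosSemidef) {k : ℕ}
    (hk : k ≤ Fintype.card ι) {t : ℝ} (ht : 0 ≤ t) :
    principalMinorSum k H * t ^ (Fintype.card ι - k) ≤ (H + t • (1 : Matrix ι ι ℝ)).det := by
  have h1 : (H + t • (1 : Matrix ι ι ℝ)).det = (-H).charpoly.eval t := by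
    rw [eval_charpoly]
    congr 1
    rw [sub_neg_eq_add, add_comm, scalar_apply, smul_one_eq_diagonal]
  rw [h1, Polynomial.eval_eq_sum_range, charpoly_natDegree_eq_dim, ← charpoly_neg_coeff H hk]
  refine Finset.single_le_sum (f := fun i => (-H).charpoly.coeff i * t ^ i) ?_
    (Finset.mem_range.mpr (by omega))
  intro i hi
  have hi' : i ≤ Fintype.card ι := by simpa [Nat.lt_succ_iff] using hi
  have := charpoly_neg_coeff H (Nat.sub_le (Fintype.card ι) i)
  rw [Nat.sub_sub_self hi'] at this
  refine mul_nonneg ?_ (pow_nonneg ht _)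
  rw [this]
  exact principalMinorSum_nonneg hH _

/-- The Gram determinant of a positive semidefinite form on an orthonormal family of size `k` is
at most `σ_k`. -/
lemma det_gram_le_principalMinorSum {N k : ℕ} {H : Matrix (Fin N) (Fin N) ℝ} (hH : H.PosSemidef)
    {v : Fin k → EuclideanSpace ℝ (Fin N)} (hv : Orthonormal ℝ v) :
    (Matrix.of fun i j => (v i).ofLp ⬝ᵥ H *ᵥ (v j).ofLp).det ≤ principalMinorSum k H := by
  have hkN : k ≤ N := by
    simpa using hv.linearIndependent.fintype_card_le_finrank
  let f : Fin k ↪ Fin N := (Fin.castLEEmb hkN)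
  let v' : Fin N → EuclideanSpace ℝ (Fin N) := fun j => if h : (j : ℕ) < k then v ⟨j, h⟩ else 0
  have hv' : Orthonormal ℝ ((Set.range f).domRestrict v') := by
    have hcomp : ∀ x : Set.range f, v' x = v ⟨(x : Fin N), by
        obtain ⟨_, i, rfl⟩ := x; exact i.2⟩ := by
      rintro ⟨_, i, rfl⟩
      simp [v', f]
    have : (Set.range f).domRestrict v' = v ∘ fun x : Set.range f => (⟨(x : Fin N), by
        obtain ⟨_, i, rfl⟩ := x; exact i.2⟩ : Fin k) := by
      funext x
      exact hcomp x
    rw [this]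
    refine hv.comp _ fun x y h => ?_
    apply Subtype.ext
    apply Fin.ext
    simpa using h
  obtain ⟨b, hb⟩ := hv'.exists_orthonormalBasis_extension_of_card_eq (by simp)
  set W : Matrix (Fin N) (Fin N) ℝ := Matrix.of fun a j => (b j).ofLp a with hW
  have hWW : Wᵀ * W = 1 := by
    ext i j
    have := orthonormal_iff_ite.mp b.orthonormal i j
    rw [one_apply, ← this]
    simp [Matrix.mul_apply, hW, PiLp.inner_apply, mul_comm]
  have hchar : (Wᵀ * H * W).charpoly = H.charpoly := by
    rw [charpoly_mul_comm, ← mul_assoc, mul_eq_one_comm.mp hWW, one_mul]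
  have hpsd : (Wᵀ * H * W).PosSemidef := by
    simpa using hH.conjTranspose_mul_mul_same W
  have hsum : principalMinorSum k (Wᵀ * H * W) = principalMinorSum k H := by
    rw [← neg_one_pow_mul_charpoly_coeff _ (by simpa using hkN), hchar,
      neg_one_pow_mul_charpoly_coeff _ (by simpa using hkN)]
  rw [← hsum]
  refine le_trans (le_of_eq ?_) (det_submatrix_le_principalMinorSum hpsd f)
  congr 1
  ext i j
  have hbi : ∀ i : Fin k, b (f i) = v i := by
    intro i
    rw [hb _ ⟨i, rfl⟩]
    simp [v', f]
  rw [submatrix_apply, Matrix.of_apply, ← hbi i, ← hbi j, mul_assoc]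
  rfl

/-- If `H ≥ 0` has the unit null vector `u`, the principal block of `H + t` omitting the last
coordinate has determinant at least `u_N² σ_k(H) t^{n-k}`. -/
lemma le_det_block_add {n k : ℕ} (hkn : k ≤ n) {H : Matrix (Fin (n + 1)) (Fin (n + 1)) ℝ}
    (hH : H.PosSemidef) {u : Fin (n + 1) → ℝ} (hu : H *ᵥ u = 0) (hu1 : u ⬝ᵥ u = 1)
    {t : ℝ} (ht : 0 < t) :
    u (Fin.last n) ^ 2 * principalMinorSum k H * t ^ (n - k) ≤
      (H.submatrix Fin.castSucc Fin.castSucc + t • (1 : Matrix (Fin n) (Fin n) ℝ)).det := by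
  set M := H + t • (1 : Matrix (Fin (n + 1)) (Fin (n + 1)) ℝ) with hM
  have hMpos : M.PosDef := (PosDef.one.smul ht).posSemidef_add hH
  have hunit : IsUnit M.det := hMpos.det_pos.ne'.isUnit
  have hsub : H.submatrix Fin.castSucc Fin.castSucc + t • (1 : Matrix (Fin n) (Fin n) ℝ) =
      M.submatrix (Fin.last n).succAbove (Fin.last n).succAbove := by
    ext i j
    simp [hM, Matrix.one_apply]
  have hadj : (M.submatrix (Fin.last n).succAbove (Fin.last n).succAbove).det =
      M.det * M⁻¹ (Fin.last n) (Fin.last n) := by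
    have h1 := adjugate_fin_succ_eq_det_submatrix M (Fin.last n) (Fin.last n)
    rw [Even.neg_one_pow ⟨_, rfl⟩, one_mul] at h1
    rw [← h1, inv_def, Matrix.smul_apply, smul_eq_mul, ← mul_assoc, Ring.mul_inverse_cancel _ hunit,
      one_mul]
  have hMu : M *ᵥ u = t • u := by
    rw [hM, add_mulVec, hu, zero_add, smul_mulVec, one_mulVec]
  have hinv : M⁻¹ *ᵥ u = t⁻¹ • u := by
    have h1 : M⁻¹ *ᵥ (M *ᵥ u) = u := by
      rw [mulVec_mulVec, nonsing_inv_mul _ hunit, one_mulVec]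
    rw [hMu, mulVec_smul] at h1
    rw [← h1, smul_smul, inv_mul_cancel₀ ht.ne', one_smul, h1]
  set c := u (Fin.last n) with hc
  have hNN : c ^ 2 / t ≤ M⁻¹ (Fin.last n) (Fin.last n) := by
    set e : Fin (n + 1) → ℝ := Pi.single (Fin.last n) 1 with he
    have hpos := hMpos.inv.posSemidef.dotProduct_mulVec_nonneg (e - c • u)
    have heu : e ⬝ᵥ u = c := by simp [he, hc]
    have hue : u ⬝ᵥ (M⁻¹ *ᵥ e) = t⁻¹ * c := by
      rw [dotProduct_mulVec, ← mulVec_transpose, ← conjTranspose_eq_transpose_of_trivial,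
        hMpos.inv.isHermitian.eq, hinv, smul_dotProduct, dotProduct_comm, heu, smul_eq_mul]
    have hee : e ⬝ᵥ (M⁻¹ *ᵥ e) = M⁻¹ (Fin.last n) (Fin.last n) := by
      simp [he]
    rw [star_trivial, mulVec_sub, mulVec_smul, hinv, sub_dotProduct, dotProduct_sub,
      dotProduct_sub, smul_dotProduct, smul_dotProduct, dotProduct_smul, dotProduct_smul,
      dotProduct_smul, dotProduct_smul, heu, hue, hee, hu1] at hpos
    simp only [smul_eq_mul] at hpos
    have : c ^ 2 / t = c * (t⁻¹ * c) := by field_simp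
    nlinarith
  rw [hsub, hadj]
  have hdet := principalMinorSum_mul_pow_le_det hH (k := k) (by simp; omega) ht.le
  rw [← hM, Fintype.card_fin, Nat.sub_add_comm hkn, pow_succ] at hdet
  calc c ^ 2 * principalMinorSum k H * t ^ (n - k)
      = (principalMinorSum k H * (t ^ (n - k) * t)) * (c ^ 2 / t) := by field_simp
    _ ≤ M.det * (c ^ 2 / t) := mul_le_mul_of_nonneg_right hdet (by positivity)
    _ ≤ _ := mul_le_mul_of_nonneg_left hNN hMpos.det_pos.le

end PrincipalMinors

section GreedyFrame

/-- A compact set has an adapted orthonormal frame, found by repeatedly choosing the point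
farthest from the span of the previously chosen points. -/
lemma exists_adapted_frame (n : ℕ) : ∀ {E : Type*} [NormedAddCommGroup E]
    [InnerProductSpace ℝ E] [FiniteDimensional ℝ E], Module.finrank ℝ E = n →
    ∀ P : Set E, IsCompact P → P.Nonempty →
    ∃ b p : Fin n → E, Orthonormal ℝ b ∧ (∀ i, p i ∈ P) ∧ (∀ i j, i < j → ⟪p i, b j⟫ = 0) ∧
      (∀ i, ∀ q ∈ P, |⟪q, b i⟫| ≤ ⟪p i, b i⟫) ∧ Antitone (fun i => ⟪p i, b i⟫) ∧
      (∀ i : Fin n, (i : ℕ) = 0 → ∀ q ∈ P, ‖q‖ ≤ ⟪p i, b i⟫) := by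
  induction n with
  | zero =>
    intro E _ _ _ _ P _ _
    refine ⟨Fin.elim0, Fin.elim0, ⟨fun i => i.elim0, fun i => i.elim0⟩, fun i => i.elim0,
      fun i => i.elim0, fun i => i.elim0, fun i => i.elim0, fun i => i.elim0⟩
  | succ n ih =>
    intro E _ _ _ hE P hP hne
    obtain ⟨p₀, hp₀, hmax⟩ := hP.exists_isMaxOn hne continuous_norm.continuousOn
    have hmax' : ∀ q ∈ P, ‖q‖ ≤ ‖p₀‖ := fun q hq => hmax hq
    obtain ⟨b₀, hb₀, hpb⟩ : ∃ b₀ : E, ‖b₀‖ = 1 ∧ p₀ = ‖p₀‖ • b₀ := by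
      rcases eq_or_ne p₀ 0 with h | h
      · have : Nontrivial E := Module.nontrivial_of_finrank_pos (R := ℝ) (by omega)
        obtain ⟨x, hx⟩ := exists_norm_eq E zero_le_one
        exact ⟨x, hx, by simp [h]⟩
      · have hn : ‖p₀‖ ≠ 0 := norm_ne_zero_iff.mpr h
        refine ⟨‖p₀‖⁻¹ • p₀, ?_, ?_⟩
        · rw [norm_smul, norm_inv, norm_norm, inv_mul_cancel₀ hn]
        · rw [smul_smul, mul_inv_cancel₀ hn, one_smul]
    have hb₀0 : b₀ ≠ 0 := by
      rintro rfl
      simp at hb₀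
    set W := (ℝ ∙ b₀)ᗮ with hW
    have hWn : Module.finrank ℝ W = n := by
      have : Fact (Module.finrank ℝ E = n + 1) := ⟨hE⟩
      exact Submodule.finrank_orthogonal_span_singleton hb₀0
    obtain ⟨b, p, hb, hpP, htri, hbd, hanti, -⟩ := ih hWn (W.orthogonalProjectionOnto '' P)
      (hP.image W.orthogonalProjectionOnto.continuous) (hne.image _)
    choose q hqP hqp using hpP
    have hqb : ∀ i j, ⟪q i, (b j : E)⟫ = ⟪p i, b j⟫ := by
      intro i j
      rw [← hqp i, Submodule.inner_orthogonalProjectionOnto_eq_of_mem_right]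
    have hbW : ∀ j, ⟪b₀, (b j : E)⟫ = 0 := fun j =>
      Submodule.mem_orthogonal_singleton_iff_inner_right.mp (b j).2
    have hbn : ∀ j, ‖(b j : E)‖ = 1 := fun j => hb.1 j
    have hp₀b : ⟪p₀, b₀⟫ = ‖p₀‖ := by
      conv_lhs => rw [hpb]
      rw [inner_smul_left, real_inner_self_eq_norm_sq, hb₀]
      simp
    have hle : ∀ x ∈ P, ∀ y : E, ‖y‖ = 1 → |⟪x, y⟫| ≤ ‖p₀‖ := by
      intro x hx y hy
      refine (abs_real_inner_le_norm x y).trans ?_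
      rw [hy, mul_one]
      exact hmax' x hx
    refine ⟨Fin.cons b₀ fun i => (b i : E), Fin.cons p₀ q, ⟨?_, ?_⟩, ?_, ?_, ?_, ?_, ?_⟩
    · intro i
      refine Fin.cases ?_ (fun i => ?_) i
      · exact hb₀
      · exact hbn i
    · intro i j
      refine Fin.cases ?_ (fun i => ?_) i <;> refine Fin.cases ?_ (fun j => ?_) j
      · intro h; exact absurd rfl h
      · intro _; exact hbW j
      · intro _
        change ⟪(b i : E), b₀⟫ = 0
        rw [real_inner_comm]
        exact hbW i
      · intro h
        exact hb.2 fun h' : i = j => h (congrArg Fin.succ h')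
    · intro i
      refine Fin.cases hp₀ (fun i => hqP i) i
    · intro i j
      refine Fin.cases ?_ (fun i => ?_) i <;> refine Fin.cases ?_ (fun j => ?_) j
      · intro h; exact absurd h (lt_irrefl _)
      · intro _
        change ⟪p₀, (b j : E)⟫ = 0
        rw [hpb, inner_smul_left, hbW, mul_zero]
      · intro h; exact absurd h (Fin.not_lt_zero _)
      · intro h
        change ⟪q i, (b j : E)⟫ = 0
        rw [hqb]
        exact htri i j (Fin.succ_lt_succ_iff.mp h)
    · intro i x hx
      refine Fin.cases ?_ (fun i => ?_) i
      · change |⟪x, b₀⟫| ≤ ⟪p₀, b₀⟫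
        rw [hp₀b]
        exact hle x hx b₀ hb₀
      · change |⟪x, (b i : E)⟫| ≤ ⟪q i, (b i : E)⟫
        rw [hqb]
        have := hbd i _ (mem_image_of_mem _ hx)
        rwa [Submodule.inner_orthogonalProjectionOnto_eq_of_mem_right] at this
    · intro i j
      refine Fin.cases ?_ (fun i => ?_) i <;> refine Fin.cases ?_ (fun j => ?_) j
      · intro _; exact le_rfl
      · intro _
        change ⟪q j, (b j : E)⟫ ≤ ⟪p₀, b₀⟫
        rw [hp₀b]
        exact (le_abs_self _).trans (hle _ (hqP j) _ (hbn j))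
      · intro h; exact absurd h (by simp)
      · intro h
        change ⟪q j, (b j : E)⟫ ≤ ⟪q i, (b i : E)⟫
        rw [hqb, hqb]
        exact hanti (Fin.succ_le_succ_iff.mp h)
    · intro i hi x hx
      have : i = 0 := Fin.ext hi
      subst this
      change ‖x‖ ≤ ⟪p₀, b₀⟫
      rw [hp₀b]
      exact hmax' x hx

end GreedyFrame

section Volumes

variable {n : ℕ}

lemma volume_box (b : OrthonormalBasis (Fin n) ℝ (EuclideanSpace ℝ (Fin n))) (l u : Fin n → ℝ) :
    volume {p : EuclideanSpace ℝ (Fin n) | ∀ i, ⟪b i, p⟫ ∈ Icc (l i) (u i)} =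
      ∏ i, ENNReal.ofReal (u i - l i) := by
  have h1 := (PiLp.volume_preserving_ofLp (Fin n)).comp b.measurePreserving_repr
  have h2 : {p : EuclideanSpace ℝ (Fin n) | ∀ i, ⟪b i, p⟫ ∈ Icc (l i) (u i)} =
      (@WithLp.ofLp 2 (Fin n → ℝ) ∘ b.repr) ⁻¹' Icc l u := by
    ext p
    simp [Pi.le_def, b.repr_apply_apply, forall_and]
  rw [h2, h1.measure_preimage measurableSet_Icc.nullMeasurableSet, Real.volume_Icc_pi]

lemma volume_open_cube (c : ℝ) :
    volume {t : EuclideanSpace ℝ (Fin n) | ∀ i, t i ∈ Ioo 0 c} = ENNReal.ofReal c ^ n := by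
  have h2 : {t : EuclideanSpace ℝ (Fin n) | ∀ i, t i ∈ Ioo 0 c} =
      (@WithLp.ofLp 2 (Fin n → ℝ)) ⁻¹' (Set.pi univ fun _ => Ioo 0 c) := by
    ext p
    simp
  rw [h2, (PiLp.volume_preserving_ofLp (Fin n)).measure_preimage
    (MeasurableSet.univ_pi fun _ => measurableSet_Ioo).nullMeasurableSet, Real.volume_pi_Ioo]
  simp

/-- Lower volume bound for a set containing the open simplex on `0` and a triangular frame. -/
lemma le_volume_of_simplex_subset (hn : 0 < n) {p : Fin n → EuclideanSpace ℝ (Fin n)}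
    (htri : ∀ i j, i < j → p i j = 0) (hdiag : ∀ i, 0 ≤ p i i)
    {S : Set (EuclideanSpace ℝ (Fin n))}
    (hS : ∀ t : Fin n → ℝ, (∀ i, 0 < t i) → ∑ i, t i < 1 → ∑ i, t i • p i ∈ S) :
    ENNReal.ofReal ((∏ i, p i i) * (1 / n) ^ n) ≤ volume S := by
  set P : Matrix (Fin n) (Fin n) ℝ := Matrix.of fun i j => p i j with hP
  have hdet : P.det = ∏ i, p i i := by
    refine Matrix.det_of_isLowerTriangular P ?_
    intro i j h
    exact htri i j h
  have himg : Matrix.toEuclideanLin P.transpose ''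
      {t : EuclideanSpace ℝ (Fin n) | ∀ i, t i ∈ Ioo 0 (1 / (n : ℝ))} ⊆ S := by
    rintro _ ⟨t, ht, rfl⟩
    have h1 := hS t (fun i => (ht i).1) (by
      calc ∑ i, t i < ∑ _i : Fin n, 1 / (n : ℝ) :=
            Finset.sum_lt_sum_of_nonempty ⟨⟨0, hn⟩, Finset.mem_univ _⟩ fun i _ => (ht i).2
        _ = 1 := by
            rw [Finset.sum_const, Finset.card_univ, Fintype.card_fin, nsmul_eq_mul]
            field_simp)
    convert h1 using 1
    ext j
    simp [Matrix.toEuclideanLin, Matrix.mulVec, dotProduct, hP, mul_comm]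
  refine le_trans (le_of_eq ?_) (measure_mono himg)
  rw [Measure.addHaar_image_linearMap, Matrix.toEuclideanLin_eq_toLin_orthonormal,
    LinearMap.det_toLin, Matrix.det_transpose, hdet, volume_open_cube,
    abs_of_nonneg (Finset.prod_nonneg fun i _ => hdiag i),
    ENNReal.ofReal_mul (Finset.prod_nonneg fun i _ => hdiag i), ENNReal.ofReal_pow (by positivity)]

/-- Volume of the part of a ball lying in a slab. -/
lemma volume_ball_inter_slab_le (hn : 0 < n) {e : EuclideanSpace ℝ (Fin n)} (he : ‖e‖ = 1)
    {C : ℝ} (c δ : ℝ) :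
    volume {p : EuclideanSpace ℝ (Fin n) | ‖p‖ ≤ C ∧ ⟪e, p⟫ ∈ Icc (c - δ) c} ≤
      ENNReal.ofReal δ * ENNReal.ofReal (2 * C) ^ (n - 1) := by
  obtain ⟨b, hb⟩ := Orthonormal.exists_orthonormalBasis_extension_of_card_eq (𝕜 := ℝ)
    (E := EuclideanSpace ℝ (Fin n)) (ι := Fin n) (by simp) (v := fun _ => e)
    (s := {⟨0, hn⟩}) (by
      refine ⟨fun _ => he, fun i j h => absurd (Subsingleton.elim i j) h⟩)
  have hb0 : b ⟨0, hn⟩ = e := hb _ rfl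
  set l : Fin n → ℝ := Function.update (fun _ => -C) ⟨0, hn⟩ (c - δ) with hl
  set u : Fin n → ℝ := Function.update (fun _ => C) ⟨0, hn⟩ c with hu
  refine (measure_mono (t := {p | ∀ i, ⟪b i, p⟫ ∈ Icc (l i) (u i)}) ?_).trans
    (le_of_eq ?_)
  · rintro p ⟨hp, hpe⟩ i
    by_cases hi : i = ⟨0, hn⟩
    · subst hi
      simpa [hl, hu, hb0] using hpe
    · have h1 := abs_real_inner_le_norm (b i) p
      rw [b.norm_eq_one, one_mul] at h1
      simpa [hl, hu, hi] using abs_le.mp (h1.trans hp)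
  · rw [volume_box, ← Finset.mul_prod_erase _ _ (Finset.mem_univ (⟨0, hn⟩ : Fin n))]
    congr 1
    · simp [hl, hu]
    · rw [Finset.prod_congr rfl (g := fun _ => ENNReal.ofReal (2 * C))]
      · simp
      · intro i hi
        have hi' : i ≠ ⟨0, hn⟩ := Finset.ne_of_mem_erase hi
        simp [hl, hu, hi', two_mul]

end Volumes

section Perturbation

variable {E : Type*} [NormedAddCommGroup E] [InnerProductSpace ℝ E]
  {E' : Type*} [NormedAddCommGroup E'] [InnerProductSpace ℝ E'] {R : ℝ} {F : E → ℝ}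

lemma fderiv_fderiv_add {f g : E → ℝ} {z : E} (hf : ContDiffAt ℝ 2 f z)
    (hg : ContDiffAt ℝ 2 g z) :
    fderiv ℝ (fderiv ℝ (fun x => f x + g x)) z =
      fderiv ℝ (fderiv ℝ f) z + fderiv ℝ (fderiv ℝ g) z := by
  have hev : fderiv ℝ (fun x => f x + g x) =ᶠ[nhds z] fun x => fderiv ℝ f x + fderiv ℝ g x := by
    filter_upwards [hf.eventually (by simp), hg.eventually (by simp)] with x h1 h2
    exact fderiv_fun_add (h1.differentiableAt (by norm_num)) (h2.differentiableAt (by norm_num))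
  rw [hev.fderiv_eq, fderiv_fun_add]
  · exact (hf.fderiv_right (m := 1) (by norm_num)).differentiableAt (by norm_num)
  · exact (hg.fderiv_right (m := 1) (by norm_num)).differentiableAt (by norm_num)

lemma fderiv_comp_linearIsometry {f : E → ℝ} {J : E' →ₗᵢ[ℝ] E} {z : E'}
    (hf : DifferentiableAt ℝ f (J z)) (v : E') :
    fderiv ℝ (fun x => f (J x)) z v = fderiv ℝ f (J z) (J v) := by
  have h := hf.hasFDerivAt.comp z J.toContinuousLinearMap.hasFDerivAt
  rw [show (fun x => f (J x)) = f ∘ J from rfl, h.fderiv]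
  rfl

lemma fderiv_fderiv_comp_linearIsometry {f : E → ℝ} {J : E' →ₗᵢ[ℝ] E} {z : E'}
    (hf : ContDiffAt ℝ 2 f (J z)) (v w : E') :
    fderiv ℝ (fderiv ℝ (fun x => f (J x))) z v w =
      fderiv ℝ (fderiv ℝ f) (J z) (J v) (J w) := by
  have hev : fderiv ℝ (fun x => f (J x)) =ᶠ[nhds z]
      fun x => (fderiv ℝ f (J x)).comp J.toContinuousLinearMap := by
    have h1 : ∀ᶠ x in nhds z, ContDiffAt ℝ 2 f (J x) :=
      J.continuous.continuousAt.eventually (hf.eventually (by simp))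
    filter_upwards [h1] with x hx
    ext v
    exact fderiv_comp_linearIsometry (hx.differentiableAt (by norm_num)) v
  have h2 : DifferentiableAt ℝ (fderiv ℝ f) (J z) :=
    (hf.fderiv_right (m := 1) (by norm_num)).differentiableAt (by norm_num)
  have h3 := (h2.hasFDerivAt.comp z J.toContinuousLinearMap.hasFDerivAt).clm_comp
    (hasFDerivAt_const J.toContinuousLinearMap z)
  rw [hev.fderiv_eq]
  change fderiv ℝ (fun x => ((fderiv ℝ f ∘ J) x).comp
    J.toContinuousLinearMap) z v w = _
  rw [h3.fderiv]
  simp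

lemma hasFDerivAt_quadratic (ε : ℝ) (z : E) :
    HasFDerivAt (fun x : E => ε * (‖x‖ ^ 2 + R ^ 2) / 2) (ε • innerSL ℝ z) z := by
  have h := (((hasStrictFDerivAt_norm_sq z).hasFDerivAt.add_const (R ^ 2)).const_mul ε).mul_const
    (2⁻¹ : ℝ)
  simp only [← div_eq_mul_inv] at h
  refine h.congr_fderiv ?_
  ext v
  simp
  ring

lemma fderiv_fderiv_quadratic (ε : ℝ) (z v w : E) :
    fderiv ℝ (fderiv ℝ (fun x : E => ε * (‖x‖ ^ 2 + R ^ 2) / 2)) z v w = ε * ⟪v, w⟫ := by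
  have h : fderiv ℝ (fun x : E => ε * (‖x‖ ^ 2 + R ^ 2) / 2) = fun x => ε • innerSL ℝ x :=
    funext fun x => (hasFDerivAt_quadratic ε x).fderiv
  rw [h, fderiv_fun_const_smul (innerSL ℝ).differentiableAt, (innerSL ℝ).fderiv]
  rfl

lemma contDiff_quadratic (ε : ℝ) : ContDiff ℝ 2 (fun x : E => ε * (‖x‖ ^ 2 + R ^ 2) / 2) :=
  ((contDiff_const.mul ((contDiff_norm_sq ℝ).add contDiff_const)).div_const _)

namespace IsRobinPotential

lemma comp_linearIsometry (hF : IsRobinPotential R F) (J : E' →ₗᵢ[ℝ] E) :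
    IsRobinPotential R (fun x => F (J x)) where
  radius_pos := hF.radius_pos
  smooth := by
    obtain ⟨U, hU, hsub, hc⟩ := hF.smooth
    refine ⟨J ⁻¹' U, hU.preimage J.continuous, fun z hz => hsub (by simpa using hz),
      hc.comp J.toContinuousLinearMap.contDiff.contDiffOn fun x hx => hx⟩
  hess_pos z hz v hv := by
    rw [fderiv_fderiv_comp_linearIsometry (hF.contDiffAt (by simpa using hz.le))]
    exact hF.hess_pos _ (by simpa using hz) _ (by rwa [Ne, map_eq_zero_iff J J.injective])
  robin z hz := by
    rw [fderiv_comp_linearIsometry (hF.differentiableAt (by simpa using hz.le))]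
    exact hF.robin _ (by simpa using hz)

lemma add_quadratic (hF : IsRobinPotential R F) {ε : ℝ} (hε : 0 ≤ ε) :
    IsRobinPotential R (fun x => F x + ε * (‖x‖ ^ 2 + R ^ 2) / 2) where
  radius_pos := hF.radius_pos
  smooth := by
    obtain ⟨U, hU, hsub, hc⟩ := hF.smooth
    exact ⟨U, hU, hsub, hc.add (contDiff_quadratic ε).contDiffOn⟩
  hess_pos z hz v hv := by
    rw [fderiv_fderiv_add (hF.contDiffAt hz.le) (contDiff_quadratic ε).contDiffAt,
      add_apply, add_apply, fderiv_fderiv_quadratic]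
    have := hF.hess_pos z hz v hv
    have h2 : 0 ≤ ⟪v, v⟫ := real_inner_self_nonneg
    positivity
  robin z hz := by
    rw [fderiv_fun_add (hF.differentiableAt hz.le) (hasFDerivAt_quadratic ε z).differentiableAt,
      add_apply, hF.robin z hz, (hasFDerivAt_quadratic ε z).fderiv]
    simp [hz]
    ring

lemma fderiv_sub_inner (hF : IsRobinPotential R F) (w : E) {z : E} (hz : ‖z‖ ≤ R) (v : E) :
    fderiv ℝ (fun x => F x - ⟪w, x⟫) z v = fderiv ℝ F z v - ⟪w, v⟫ := by
  have h := (hF.differentiableAt hz).hasFDerivAt.sub (innerSL ℝ w).hasFDerivAt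
  change HasFDerivAt (fun x => F x - ⟪w, x⟫) _ z at h
  rw [h.fderiv]
  simp

lemma fderiv_fderiv_sub_inner (hF : IsRobinPotential R F) (w : E) {z : E} (hz : ‖z‖ ≤ R) :
    fderiv ℝ (fderiv ℝ (fun x => F x - ⟪w, x⟫)) z = fderiv ℝ (fderiv ℝ F) z := by
  have hlin : ContDiff ℝ 2 (fun x : E => -⟪w, x⟫) := (innerSL ℝ w).contDiff.neg
  have hd : fderiv ℝ (fun x : E => -⟪w, x⟫) = fun _ => -innerSL ℝ w :=
    funext fun x => ((innerSL ℝ w).hasFDerivAt.neg).fderiv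
  simp only [sub_eq_add_neg]
  rw [fderiv_fderiv_add (hF.contDiffAt hz) hlin.contDiffAt, hd]
  simp

/-- Horizontal translation of the hypersurface changes the potential by a linear function. -/
lemma sub_inner (hF : IsRobinPotential R F) (w : E) :
    IsRobinPotential R (fun x => F x - ⟪w, x⟫) where
  radius_pos := hF.radius_pos
  smooth := by
    obtain ⟨U, hU, hsub, hc⟩ := hF.smooth
    exact ⟨U, hU, hsub, hc.sub (innerSL ℝ w).contDiff.contDiffOn⟩
  hess_pos z hz v hv := by
    rw [hF.fderiv_fderiv_sub_inner w hz.le]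
    exact hF.hess_pos z hz v hv
  robin z hz := by rw [hF.fderiv_sub_inner w hz.le, hF.robin z hz]

end IsRobinPotential

end Perturbation

section RobinEstimates

lemma nontrivial_euclideanSpace {n : ℕ} (hn : 0 < n) : Nontrivial (EuclideanSpace ℝ (Fin n)) :=
  Module.nontrivial_of_finrank_pos (R := ℝ) (by simpa using hn)

namespace IsRobinPotential

variable {n : ℕ} {R : ℝ} {f : EuclideanSpace ℝ (Fin n) → ℝ}

/-- Adapted frame of the boundary gradients: the boundary points `p i` form a triangular system,
and the values of `f` in the frame directions are controlled by the diagonal entries. -/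
lemma exists_gradient_frame (hf : IsRobinPotential R f) (hn : 0 < n)
    (hpos : ∀ w : EuclideanSpace ℝ (Fin n), ‖w‖ = R → 0 < f w) :
    ∃ (b : OrthonormalBasis (Fin n) ℝ (EuclideanSpace ℝ (Fin n)))
      (p : Fin n → EuclideanSpace ℝ (Fin n)),
      (∀ i w, ‖w‖ = R → ⟪p i, w⟫ ≤ f w) ∧ (∀ i j, i < j → ⟪p i, b j⟫ = 0) ∧
      Antitone (fun i => ⟪p i, b i⟫) ∧ (∀ i, 0 < ⟪p i, b i⟫) ∧
      (∀ i, f (R • b i) ≤ R * ⟪p i, b i⟫) ∧ (∀ i, f (-(R • b i)) ≤ R * ⟪p i, b i⟫) ∧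
      (∀ i, f 0 ≤ R * ⟪p i, b i⟫) ∧
      (∀ i : Fin n, (i : ℕ) = 0 → ‖p i‖ = ⟪p i, b i⟫ ∧
        ∀ w, ‖w‖ = R → f w ≤ R * ⟪p i, b i⟫) := by
  have := nontrivial_euclideanSpace hn
  have hR := hf.radius_pos
  have hcont : ContinuousOn (euclideanGrad f) (Metric.sphere 0 R) := fun z hz =>
    (hasFDerivAt_euclideanGrad (hf.differentiableAt_fderiv
      (by simpa using (mem_sphere_zero_iff_norm.mp hz).le))).continuousAt.continuousWithinAt
  obtain ⟨b, p, hb, hpP, htri, hbd, hanti, hnorm⟩ := exists_adapted_frame n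
    (E := EuclideanSpace ℝ (Fin n)) (by simp) (euclideanGrad f '' Metric.sphere 0 R)
    ((isCompact_sphere 0 R).image_of_continuousOn hcont)
    ((NormedSpace.sphere_nonempty.mpr hR.le).image _)
  have hspan := hb.linearIndependent.span_eq_top_of_card_eq_finrank' (by simp)
  set B := OrthonormalBasis.mk hb hspan.ge with hB
  have hBb : ∀ i, B i = b i := fun i => by simp [hB]
  have hgrad : ∀ w : EuclideanSpace ℝ (Fin n), ‖w‖ = R → euclideanGrad f w ∈
      euclideanGrad f '' Metric.sphere 0 R := fun w hw =>
    mem_image_of_mem _ (by simpa using hw)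
  have hval : ∀ w : EuclideanSpace ℝ (Fin n), ‖w‖ = R → f w = ⟪euclideanGrad f w, w⟫ :=
    fun w hw => by rw [inner_euclideanGrad, hf.robin w hw]
  have hRb : ∀ i, ‖R • b i‖ = R := fun i => by
    rw [norm_smul, hb.1 i, mul_one, norm_of_nonneg hR.le]
  have h1 : ∀ i, f (R • b i) ≤ R * ⟪p i, b i⟫ := by
    intro i
    rw [hval _ (hRb i), inner_smul_right]
    exact mul_le_mul_of_nonneg_left
      ((le_abs_self _).trans (hbd i _ (hgrad _ (hRb i)))) hR.le
  have h2 : ∀ i, f (-(R • b i)) ≤ R * ⟪p i, b i⟫ := by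
    intro i
    have hn' : ‖-(R • b i)‖ = R := by rw [norm_neg, hRb]
    rw [hval _ hn', inner_neg_right, inner_smul_right, ← mul_neg]
    exact mul_le_mul_of_nonneg_left
      ((neg_le_abs _).trans (hbd i _ (hgrad _ hn'))) hR.le
  have hapos : ∀ i, 0 < ⟪p i, b i⟫ := by
    intro i
    exact pos_of_mul_pos_right ((hpos _ (hRb i)).trans_le (h1 i)) hR.le
  refine ⟨B, p, ?_, ?_, ?_, ?_, ?_, ?_, ?_, ?_⟩
  · intro i w hw
    obtain ⟨z, hz, hzp⟩ := hpP i
    rw [← hzp, inner_euclideanGrad]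
    exact hf.fderiv_le_of_sphere (by simpa using hz) hw.le
  · intro i j hij
    rw [hBb]
    exact htri i j hij
  · simpa only [hBb] using hanti
  · simpa only [hBb] using hapos
  · simpa only [hBb] using h1
  · simpa only [hBb] using h2
  · intro i
    rw [hBb]
    have := hf.two_mul_zero_le (hRb i)
    linarith [h1 i, h2 i]
  · intro i hi
    rw [hBb]
    refine ⟨le_antisymm (hnorm i hi _ (hpP i)) ?_, ?_⟩
    · have := real_inner_le_norm (p i) (b i)
      rwa [hb.1 i, mul_one] at this
    · intro w hw
      rw [hval w hw]
      have h3 := real_inner_le_norm (euclideanGrad f w) w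
      rw [hw, mul_comm] at h3
      exact h3.trans (mul_le_mul_of_nonneg_left (hnorm i hi _ (hgrad w hw)) hR.le)

/-- The product of the `k` largest widths of the base is controlled by the Gram determinants of the
Hessian. -/
lemma prod_le_of_gram_le (hf : IsRobinPotential R f)
    (hpos : ∀ w : EuclideanSpace ℝ (Fin n), ‖w‖ = R → 0 < f w) {k : ℕ} (hk : 0 < k) {D : ℝ}
    (hD : 0 ≤ D) {v : Fin k → EuclideanSpace ℝ (Fin n)} (hv : Orthonormal ℝ v)
    (hgram : ∀ z : EuclideanSpace ℝ (Fin n), ‖z‖ < R →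
      |(Matrix.of fun i j => fderiv ℝ (fderiv ℝ f) z (v i) (v j)).det| ≤ D)
    {p : Fin k → EuclideanSpace ℝ (Fin n)} (hp : ∀ i w, ‖w‖ = R → ⟪p i, w⟫ ≤ f w)
    (htri : ∀ i j, i < j → ⟪p i, v j⟫ = 0) (hdiag : ∀ i, 0 ≤ ⟪p i, v i⟫) :
    ∏ i, ⟪p i, v i⟫ ≤
      D * volume.real (Metric.ball (0 : EuclideanSpace ℝ (Fin k)) R) * k ^ k := by
  let J : EuclideanSpace ℝ (Fin k) →ₗᵢ[ℝ] EuclideanSpace ℝ (Fin n) :=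
    ((EuclideanSpace.basisFun (Fin k) ℝ).toBasis.constr ℝ v).isometryOfOrthonormal
      (v := (EuclideanSpace.basisFun (Fin k) ℝ).toBasis)
      (by simp) (by
        convert hv using 1
        funext i
        simp)
  have hJ : ∀ i, J (EuclideanSpace.single i 1) = v i := by
    intro i
    have := (EuclideanSpace.basisFun (Fin k) ℝ).toBasis.constr_basis ℝ v i
    rwa [OrthonormalBasis.coe_toBasis, EuclideanSpace.basisFun_apply] at this
  have hJsum : ∀ w : EuclideanSpace ℝ (Fin k), J w = ∑ i, w i • v i := by
    intro w
    conv_lhs => rw [← sum_smul_single_eq w]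
    simp [map_sum, hJ]
  have hg := hf.comp_linearIsometry J
  have hvol := (measure_mono hg.wulffBase_subset_image).trans
    (hg.volume_image_grad_le subset_rfl measurableSet_ball (hi := D) (by
      intro z hz
      have hz' : ‖J z‖ < R := by simpa using hz
      have : hessianMatrix (fun x => f (J x)) z =
          Matrix.of fun i j => fderiv ℝ (fderiv ℝ f) (J z) (v i) (v j) := by
        ext i j
        rw [hessianMatrix, fderiv_fderiv_comp_linearIsometry (hf.contDiffAt hz'.le), hJ, hJ]
        rfl
      rw [this]
      exact hgram _ hz'))
  have hsim := le_volume_of_simplex_subset hk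
    (p := fun i => WithLp.toLp 2 fun j => ⟪p i, v j⟫) htri hdiag
    (S := wulffBase R (fun x => f (J x))) (by
      intro t ht ht1 w hw
      have hJw : ‖J w‖ = R := by simpa using hw
      have h1 : ∀ i, ⟪(WithLp.toLp 2 fun j => ⟪p i, v j⟫ : EuclideanSpace ℝ (Fin k)), w⟫ =
          ⟪p i, J w⟫ := by
        intro i
        rw [hJsum, inner_sum, PiLp.inner_apply]
        exact Finset.sum_congr rfl fun j _ => by simp [inner_smul_right]
      rw [sum_inner]
      calc ∑ i, ⟪t i • (WithLp.toLp 2 fun j => ⟪p i, v j⟫ : EuclideanSpace ℝ (Fin k)), w⟫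
          = ∑ i, t i * ⟪p i, J w⟫ := Finset.sum_congr rfl fun i _ => by
            rw [inner_smul_left, h1]; simp
        _ ≤ ∑ i, t i * f (J w) := Finset.sum_le_sum fun i _ =>
            mul_le_mul_of_nonneg_left (hp i _ hJw) (ht i).le
        _ = (∑ i, t i) * f (J w) := by rw [Finset.sum_mul]
        _ < f (J w) := by
            have := hpos _ hJw
            nlinarith)
  have hfin : ENNReal.ofReal D *
      volume (Metric.ball (0 : EuclideanSpace ℝ (Fin k)) R) ≠ ⊤ :=
    ENNReal.mul_ne_top ENNReal.ofReal_ne_top measure_ball_lt_top.ne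
  have h := ENNReal.toReal_mono hfin (hsim.trans hvol)
  have hprod : 0 ≤ ∏ i, ⟪p i, v i⟫ := Finset.prod_nonneg fun i _ => hdiag i
  rw [ENNReal.toReal_ofReal (mul_nonneg hprod (by positivity)), ENNReal.toReal_mul,
    ENNReal.toReal_ofReal hD] at h
  have hk' : (0 : ℝ) < (k : ℝ) ^ k := by positivity
  rw [one_div, inv_pow] at h
  change (∏ i, ⟪p i, v i⟫) * ((k : ℝ) ^ k)⁻¹ ≤ _ at h
  rw [← div_eq_mul_inv, div_le_iff₀ hk'] at h
  exact h

end IsRobinPotential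

end RobinEstimates

section UniformBounds

namespace IsRobinPotential

lemma volume_wulffBase_le_of_widths {n : ℕ} {R : ℝ} (hR : 0 < R)
    {F : EuclideanSpace ℝ (Fin n) → ℝ}
    (b : OrthonormalBasis (Fin n) ℝ (EuclideanSpace ℝ (Fin n))) {c : Fin n → ℝ}
    (h1 : ∀ i, F (R • b i) ≤ R * c i) (h2 : ∀ i, F (-(R • b i)) ≤ R * c i) :
    volume (wulffBase R F) ≤ ∏ i, ENNReal.ofReal (2 * c i) := by
  have hRb : ∀ i, ‖R • b i‖ = R := fun i => by
    rw [norm_smul, b.norm_eq_one, mul_one, norm_of_nonneg hR.le]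
  have hbox := volume_box b (fun i => -c i) c
  refine (measure_mono ?_).trans (hbox.le.trans (le_of_eq ?_))
  · intro p hp i
    have h3 := (hp _ (hRb i)).le.trans (h1 i)
    have h4 := (hp (-(R • b i)) (by rw [norm_neg, hRb])).le.trans (h2 i)
    rw [inner_smul_right, real_inner_comm] at h3
    rw [inner_neg_right, inner_smul_right, real_inner_comm, ← mul_neg] at h4
    have h3' := le_of_mul_le_mul_left h3 hR
    have h4' := le_of_mul_le_mul_left h4 hR
    exact ⟨by linarith, h3'⟩
  · exact Finset.prod_congr rfl fun i _ => by rw [sub_neg_eq_add, two_mul]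

lemma hessianMatrix_add_quadratic {n : ℕ} {R : ℝ} {f : EuclideanSpace ℝ (Fin n) → ℝ}
    (hf : IsRobinPotential R f) (ε : ℝ) {z : EuclideanSpace ℝ (Fin n)} (hz : ‖z‖ ≤ R) :
    hessianMatrix (fun x => f x + ε * (‖x‖ ^ 2 + R ^ 2) / 2) z =
      hessianMatrix f z + ε • (1 : Matrix (Fin n) (Fin n) ℝ) := by
  ext i j
  rw [hessianMatrix, fderiv_fderiv_add (hf.contDiffAt hz) (contDiff_quadratic ε).contDiffAt,
    add_apply, add_apply, fderiv_fderiv_quadratic, Matrix.add_apply, Matrix.smul_apply,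
    hessianMatrix, Matrix.one_apply]
  simp [EuclideanSpace.inner_single_left]

/-- Uniform upper bound from an upper bound on the `k`-dimensional Gram determinants of the
Hessian and a lower bound on the regularized Hessian determinant. -/
lemma exists_upper_bound (k r : ℕ) (hk : 0 < k) {R D m : ℝ} (hR : 0 < R) (hD : 0 < D)
    (hm : 0 < m) : ∃ C : ℝ, 0 < C ∧ ∀ f : EuclideanSpace ℝ (Fin (k + r)) → ℝ,
      IsRobinPotential R f → (∀ w, ‖w‖ = R → 0 < f w) →
      (∀ v : Fin k → EuclideanSpace ℝ (Fin (k + r)), Orthonormal ℝ v → ∀ z, ‖z‖ < R →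
        |(Matrix.of fun i j => fderiv ℝ (fderiv ℝ f) z (v i) (v j)).det| ≤ D) →
      (∀ ε : ℝ, 0 < ε → ∀ z, ‖z‖ < R → m * ε ^ r ≤
        (hessianMatrix f z + ε • (1 : Matrix (Fin (k + r)) (Fin (k + r)) ℝ)).det) →
      ∀ z, ‖z‖ ≤ R → f z ≤ C := by
  have := nontrivial_euclideanSpace (n := k + r) (by omega)
  set C₁ := D * volume.real (Metric.ball (0 : EuclideanSpace ℝ (Fin k)) R) * k ^ k with hC₁
  have hC₁0 : 0 ≤ C₁ := by positivity
  set C₂ := max 1 C₁ with hC₂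
  have hC₂1 : 1 ≤ C₂ := le_max_left _ _
  set β := volume.real (Metric.ball (0 : EuclideanSpace ℝ (Fin (k + r))) (R / 4)) with hβ
  have hβ0 : 0 < β := ENNReal.toReal_pos (Metric.measure_ball_pos _ _ (by positivity)).ne'
    measure_ball_lt_top.ne
  set C₃ := ((k + r : ℕ) * (2 * ((R + R ^ 2 / 2) * C₂)) * ((2 * (1 + R)) ^ (k + r) * C₁)) /
    (m * β * R) with hC₃
  have hC₃0 : 0 ≤ C₃ := by positivity
  refine ⟨2 * R * C₃ + 1, by positivity, fun f hf hpos hgram hdet z hz => ?_⟩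
  obtain ⟨b, p, hpw, htri, hanti, hapos, hb1, hb2, hT, hL⟩ :=
    hf.exists_gradient_frame (by omega) hpos
  set a : Fin (k + r) → ℝ := fun i => ⟪p i, b i⟫ with ha
  set i₀ : Fin (k + r) := ⟨0, by omega⟩ with hi₀
  set i₁ : Fin k := ⟨k - 1, by omega⟩ with hi₁
  set L := a i₀ with hLdef
  set ε := a (Fin.castAdd r i₁) with hε
  have hL0 : 0 < L := hapos i₀
  have hε0 : 0 < ε := hapos _
  obtain ⟨hpL, hfL⟩ := hL i₀ rfl
  have hprod : ∏ i : Fin k, a (Fin.castAdd r i) ≤ C₁ :=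
    hf.prod_le_of_gram_le hpos hk hD.le (v := fun i => b (Fin.castAdd r i))
      (b.orthonormal.comp _ (Fin.castAdd_injective k r))
      (hgram _ (b.orthonormal.comp _ (Fin.castAdd_injective k r)))
      (p := fun i => p (Fin.castAdd r i)) (fun i => hpw _) (fun i j hij => htri _ _ hij)
      (fun i => (hapos _).le)
  have hεle : ∀ i : Fin k, ε ≤ a (Fin.castAdd r i) := fun i =>
    hanti (by
      rw [Fin.le_def]
      simp only [Fin.val_castAdd, hi₁]
      omega)
  have hleε : ∀ i : Fin r, a (Fin.natAdd k i) ≤ ε := fun i =>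
    hanti (by
      rw [Fin.le_def]
      simp only [Fin.val_castAdd, Fin.val_natAdd, hi₁]
      omega)
  have hεC₂ : ε ≤ C₂ := by
    rcases le_or_gt ε 1 with h | h
    · exact h.trans hC₂1
    · have h1 : ε ^ k ≤ ∏ i : Fin k, a (Fin.castAdd r i) := by
        calc ε ^ k = ∏ _i : Fin k, ε := by simp
          _ ≤ _ := Finset.prod_le_prod (fun _ _ => hε0.le) fun i _ => hεle i
      exact (le_self_pow₀ h.le hk.ne').trans (h1.trans (hprod.trans (le_max_right _ _)))
  set F := fun x => f x + ε * (‖x‖ ^ 2 + R ^ 2) / 2 with hF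
  have hFR : IsRobinPotential R F := hf.add_quadratic hε0.le
  have hFsph : ∀ w : EuclideanSpace ℝ (Fin (k + r)), ‖w‖ = R → F w = f w + ε * R ^ 2 := by
    intro w hw
    simp only [hF, hw]
    ring
  have hRb : ∀ i, ‖R • b i‖ = R := fun i => by
    rw [norm_smul, b.norm_eq_one, mul_one, norm_of_nonneg hR.le]
  have hvol : volume (wulffBase R F) ≤ ENNReal.ofReal ((2 * (1 + R)) ^ (k + r) * C₁ * ε ^ r) := by
    have hle : ∀ i, 0 ≤ 2 * (a i + ε * R) := fun i => by
      have := hapos i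
      positivity
    refine (volume_wulffBase_le_of_widths hR b (c := fun i => a i + ε * R) ?_ ?_).trans ?_
    · intro i
      rw [hFsph _ (hRb i)]
      nlinarith [hb1 i]
    · intro i
      rw [hFsph _ (by rw [norm_neg, hRb i])]
      nlinarith [hb2 i]
    · rw [← ENNReal.ofReal_prod_of_nonneg fun i _ => hle i]
      refine ENNReal.ofReal_le_ofReal ?_
      rw [Fin.prod_univ_add]
      calc (∏ i : Fin k, 2 * (a (Fin.castAdd r i) + ε * R)) *
            ∏ i : Fin r, 2 * (a (Fin.natAdd k i) + ε * R)
          ≤ (∏ i : Fin k, 2 * (1 + R) * a (Fin.castAdd r i)) * ∏ i : Fin r, 2 * (1 + R) * ε := by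
            refine mul_le_mul (Finset.prod_le_prod (fun i _ => hle _) fun i _ => ?_)
              (Finset.prod_le_prod (fun i _ => hle _) fun i _ => ?_)
              (Finset.prod_nonneg fun i _ => hle _)
              (Finset.prod_nonneg fun i _ => mul_nonneg (by positivity) (hapos _).le)
            · nlinarith [hεle i]
            · nlinarith [hleε i]
        _ = (2 * (1 + R)) ^ (k + r) * (∏ i : Fin k, a (Fin.castAdd r i)) * ε ^ r := by
            simp only [Finset.prod_mul_distrib, Finset.prod_const, Finset.card_univ,
              Fintype.card_fin, mul_pow, pow_add]
            ring
        _ ≤ _ := by gcongr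
  have hvolr : volume.real (wulffBase R F) ≤ (2 * (1 + R)) ^ (k + r) * C₁ * ε ^ r :=
    ENNReal.toReal_le_of_le_ofReal (by positivity) hvol
  have he : ‖L⁻¹ • p i₀‖ = 1 := by
    rw [norm_smul, hpL, norm_inv, norm_of_nonneg hL0.le]
    exact inv_mul_cancel₀ hL0.ne'
  have hshell := hFR.volume_shell_le (fun w hw => by
      rw [hFsph w hw]
      have := hpos w hw
      positivity) he hL0 (fun y hy => by
      rw [inner_smul_left, hFsph y hy]
      simp only [RCLike.conj_to_real]
      rw [← mul_assoc, mul_inv_cancel₀ hL0.ne', one_mul]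
      have := hpw i₀ y hy
      nlinarith [mul_pos hε0 (pow_pos hR 2)]) (ne_top_of_le_ne_top ENNReal.ofReal_ne_top hvol)
    (lo := m * ε ^ r) (by positivity) (fun z hz => by
      rw [hF, hf.hessianMatrix_add_quadratic ε hz.le]
      exact hdet ε hε0 z hz)
  have hF0 : F 0 ≤ (R + R ^ 2 / 2) * C₂ := by
    have h1 : F 0 ≤ (R + R ^ 2 / 2) * ε := by
      simp only [hF, norm_zero]
      have := hT (Fin.castAdd r i₁)
      change f 0 ≤ R * ε at this
      nlinarith
    exact h1.trans (mul_le_mul_of_nonneg_left hεC₂ (by positivity))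
  have hLC : L ≤ C₃ := by
    have h1 : m * ε ^ r * β ≤ (k + r : ℕ) * (2 * ((R + R ^ 2 / 2) * C₂) / (L * R)) *
        ((2 * (1 + R)) ^ (k + r) * C₁ * ε ^ r) := by
      refine hshell.trans (mul_le_mul ?_ hvolr measureReal_nonneg (by positivity))
      gcongr
    have hεr : 0 < ε ^ r := pow_pos hε0 r
    have h2 : m * β ≤ (k + r : ℕ) * (2 * ((R + R ^ 2 / 2) * C₂) / (L * R)) *
        ((2 * (1 + R)) ^ (k + r) * C₁) := by
      refine le_of_mul_le_mul_right ?_ hεr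
      linarith
    have h3 : (k + r : ℕ) * (2 * ((R + R ^ 2 / 2) * C₂) / (L * R)) *
        ((2 * (1 + R)) ^ (k + r) * C₁) = ((k + r : ℕ) * (2 * ((R + R ^ 2 / 2) * C₂)) *
        ((2 * (1 + R)) ^ (k + r) * C₁)) / (L * R) := by ring
    rw [h3, le_div_iff₀ (by positivity)] at h2
    rw [hC₃, le_div_iff₀ (by positivity)]
    linarith
  have hfz := hf.le_add_of_sphere_le (by positivity : 0 ≤ R * L) hfL hz
  have := hT i₀
  change f 0 ≤ R * L at this
  have : R * L ≤ R * C₃ := mul_le_mul_of_nonneg_left hLC hR.le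
  linarith

end IsRobinPotential

end UniformBounds

section Centroid

/-- The centroid of a set of given volume in a ball is quantitatively far from every
supporting hyperplane. -/
lemma exists_centroid {n : ℕ} (hn : 0 < n) {ρ q : ℝ} (hρ : 0 < ρ) (hq : 0 < q)
    {Q : Set (EuclideanSpace ℝ (Fin n))} (hQm : MeasurableSet Q)
    (hQ : Q ⊆ Metric.closedBall 0 ρ) (hqQ : q ≤ volume.real Q) :
    ∃ w : EuclideanSpace ℝ (Fin n), ‖w‖ ≤ ρ ∧ ∀ (e : EuclideanSpace ℝ (Fin n)) (h : ℝ),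
      ‖e‖ = 1 → (∀ p ∈ Q, ⟪e, p⟫ ≤ h) → q / (2 * (2 * ρ) ^ (n - 1)) / 2 ≤ h - ⟪e, w⟫ := by
  have hfin : volume Q ≠ ⊤ := ne_top_of_le_ne_top
    (isCompact_closedBall (0 : EuclideanSpace ℝ (Fin n)) ρ).measure_lt_top.ne (measure_mono hQ)
  have hv : 0 < volume.real Q := hq.trans_le hqQ
  have h0 : volume Q ≠ 0 := fun h => hv.ne' (by rw [measureReal_def, h, ENNReal.toReal_zero])
  have hint : IntegrableOn (fun p : EuclideanSpace ℝ (Fin n) => p) Q :=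
    (continuous_id.continuousOn.integrableOn_compact (isCompact_closedBall _ ρ)).mono_set hQ
  have hae : ∀ᵐ p ∂volume.restrict Q, p ∈ Metric.closedBall (0 : EuclideanSpace ℝ (Fin n)) ρ :=
    (ae_restrict_mem hQm).mono fun p hp => hQ hp
  refine ⟨⨍ p in Q, p, ?_, fun e h he hle => ?_⟩
  · simpa using (convex_closedBall (0 : EuclideanSpace ℝ (Fin n)) ρ).set_average_mem
      Metric.isClosed_closedBall h0 hfin hae hint
  set δ := q / (2 * (2 * ρ) ^ (n - 1)) with hδ
  have hδ0 : 0 < δ := by positivity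
  have hinte : IntegrableOn (fun p : EuclideanSpace ℝ (Fin n) => ⟪e, p⟫) Q := hint.const_inner e
  have hintc : IntegrableOn (fun _ : EuclideanSpace ℝ (Fin n) => h) Q := integrableOn_const hfin
  have hcalc : ∫ p in Q, (h - ⟪e, p⟫) = volume.real Q * (h - ⟪e, ⨍ p in Q, p⟫) := by
    rw [integral_sub hintc hinte, setIntegral_const, integral_inner hint, setAverage_eq,
      inner_smul_right, smul_eq_mul, mul_sub, mul_inv_cancel_left₀ hv.ne']
  have hmarkov := mul_meas_ge_le_integral_of_nonneg (μ := volume.restrict Q)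
    (f := fun p => h - ⟪e, p⟫)
    ((ae_restrict_mem hQm).mono fun p hp => sub_nonneg.mpr (hle p hp)) (hintc.sub hinte) δ
  rw [hcalc] at hmarkov
  have hslab : volume.real {p : EuclideanSpace ℝ (Fin n) | ‖p‖ ≤ ρ ∧ ⟪e, p⟫ ∈ Icc (h - δ) h} ≤
      q / 2 := by
    refine (ENNReal.toReal_mono (by finiteness) (volume_ball_inter_slab_le hn he h δ)).trans ?_
    rw [ENNReal.toReal_mul, ENNReal.toReal_pow, ENNReal.toReal_ofReal hδ0.le,
      ENNReal.toReal_ofReal (by positivity), hδ]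
    apply le_of_eq
    field_simp
  have hcover : volume.real Q ≤ (volume.restrict Q).real {p | δ ≤ h - ⟪e, p⟫} +
      volume.real {p : EuclideanSpace ℝ (Fin n) | ‖p‖ ≤ ρ ∧ ⟪e, p⟫ ∈ Icc (h - δ) h} := by
    rw [measureReal_restrict_apply' hQm]
    refine (measureReal_mono (fun p hp => ?_) ?_).trans (measureReal_union_le _ _)
    · by_cases hp' : δ ≤ h - ⟪e, p⟫
      · exact Or.inl ⟨hp', hp⟩
      · exact Or.inr ⟨by simpa using hQ hp, by linarith, hle p hp⟩
    · exact (measure_union_lt_top ((measure_mono inter_subset_right).trans_lt hfin.lt_top)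
        ((volume_ball_inter_slab_le hn he h δ).trans_lt (by finiteness))).ne
  have h1 : volume.real Q / 2 ≤ (volume.restrict Q).real {p | δ ≤ h - ⟪e, p⟫} := by linarith
  have h2 : volume.real Q * (δ / 2) ≤ volume.real Q * (h - ⟪e, ⨍ p in Q, p⟫) := by
    nlinarith
  exact le_of_mul_le_mul_left h2 hv

namespace IsRobinPotential

/-- Uniform positivity after a translation, from a two-sided control of the Hessian
determinant and of the potential. -/
lemma exists_lower_bound {n : ℕ} (hn : 0 < n) {R C lo : ℝ} (hR : 0 < R) (hC : 0 < C)
    (hlo : 0 < lo) : ∃ c : ℝ, 0 < c ∧ ∀ f : EuclideanSpace ℝ (Fin n) → ℝ,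
      IsRobinPotential R f → (∀ z, ‖z‖ ≤ R → f z ≤ C) →
      (∀ z, ‖z‖ < R → lo ≤ (hessianMatrix f z).det) →
      ∃ w : EuclideanSpace ℝ (Fin n), ‖w‖ ≤ C / R ∧ ∀ z, ‖z‖ ≤ R → c ≤ f z - ⟪w, z⟫ := by
  have := nontrivial_euclideanSpace hn
  set ρ := C / R with hρ
  have hρ0 : 0 < ρ := by positivity
  set q := lo * volume.real (Metric.ball (0 : EuclideanSpace ℝ (Fin n)) R) with hq
  have hq0 : 0 < q := mul_pos hlo (ENNReal.toReal_pos (Metric.measure_ball_pos _ _ hR).ne'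
    measure_ball_lt_top.ne)
  set δ := R * (q / (2 * (2 * ρ) ^ (n - 1)) / 2) with hδ
  have hδ0 : 0 < δ := by positivity
  set β := volume.real (Metric.ball (0 : EuclideanSpace ℝ (Fin n)) (R / 4)) with hβ
  have hβ0 : 0 < β := ENNReal.toReal_pos (Metric.measure_ball_pos _ _ (by positivity)).ne'
    measure_ball_lt_top.ne
  set W := volume.real (Metric.closedBall (0 : EuclideanSpace ℝ (Fin n)) (2 * ρ)) with hW
  have hW0 : 0 < W := ENNReal.toReal_pos (Metric.measure_closedBall_pos _ _ (by positivity)).ne'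
    (isCompact_closedBall _ _).measure_lt_top.ne
  set T := lo * β * δ / (2 * n * W) with hT
  have hn0 : (0 : ℝ) < n := by exact_mod_cast hn
  have hT0 : 0 < T := by positivity
  refine ⟨min (T / 2) (T * δ / (4 * ρ * R)), by positivity, fun f hf hfC hdet => ?_⟩
  have hinner : ∀ (p : EuclideanSpace ℝ (Fin n)) {c : ℝ}, 0 ≤ c →
      (∀ y : EuclideanSpace ℝ (Fin n), ‖y‖ = R → ⟪p, y⟫ ≤ R * c) → ‖p‖ ≤ c := by
    intro p c hc hp
    rcases eq_or_ne p 0 with rfl | h0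
    · simpa using hc
    obtain ⟨y, hy, hpy⟩ := exists_pos_smul_mem_sphere hR h0
    have hn : 0 < ‖p‖ := norm_pos_iff.mpr h0
    have h1 := hp y hy
    nth_rewrite 1 [hpy] at h1
    rw [inner_smul_left, real_inner_self_eq_norm_sq, hy] at h1
    simp only [RCLike.conj_to_real] at h1
    have h2 : ‖p‖ / R * R ^ 2 = R * ‖p‖ := by field_simp
    rw [h2] at h1
    exact le_of_mul_le_mul_left h1 hR
  have himage : wulffBase R f = euclideanGrad f '' Metric.ball 0 R :=
    Subset.antisymm hf.wulffBase_subset_image (by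
      rintro _ ⟨z, hz, rfl⟩
      exact hf.euclideanGrad_mem (by simpa using hz))
  have hQm : MeasurableSet (wulffBase R f) := by
    rw [himage]
    exact hf.measurableSet_image_grad Subset.rfl measurableSet_ball
  have hQ : wulffBase R f ⊆ Metric.closedBall 0 ρ := fun p hp => by
    rw [mem_closedBall_zero_iff]
    refine hinner p hρ0.le fun y hy => (hp y hy).le.trans ((hfC y hy.le).trans (le_of_eq ?_))
    rw [hρ, mul_div_cancel₀ _ hR.ne']
  have hqQ : q ≤ volume.real (wulffBase R f) := by
    have h1 := hf.le_volume_image_grad Subset.rfl measurableSet_ball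
      (fun z hz => hdet z (by simpa using hz))
    rw [← himage] at h1
    have h2 := ENNReal.toReal_mono (ne_top_of_le_ne_top
      (isCompact_closedBall (0 : EuclideanSpace ℝ (Fin n)) ρ).measure_lt_top.ne
      (measure_mono hQ)) h1
    rwa [ENNReal.toReal_mul, ENNReal.toReal_ofReal hlo.le] at h2
  obtain ⟨w, hwρ, hw⟩ := exists_centroid hn hρ0 hq0 hQm hQ hqQ
  refine ⟨w, hwρ, ?_⟩
  set F := fun z => f z - ⟪w, z⟫ with hF
  have hFR : IsRobinPotential R F := hf.sub_inner w
  have hsph : ∀ y : EuclideanSpace ℝ (Fin n), ‖y‖ = R → δ ≤ F y := by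
    intro y hy
    have hey : ‖R⁻¹ • y‖ = 1 := by
      rw [norm_smul, norm_inv, norm_of_nonneg hR.le, hy, inv_mul_cancel₀ hR.ne']
    have h1 := hw (R⁻¹ • y) (R⁻¹ * f y) hey fun p hp => by
      rw [inner_smul_left, real_inner_comm]
      exact mul_le_mul_of_nonneg_left (hp y hy).le (by simp only [RCLike.conj_to_real]; positivity)
    rw [inner_smul_left, real_inner_comm] at h1
    simp only [RCLike.conj_to_real] at h1
    rw [← mul_sub, ← div_eq_inv_mul, le_div_iff₀' hR] at h1
    exact h1
  have hFpos : ∀ y : EuclideanSpace ℝ (Fin n), ‖y‖ = R → 0 < F y :=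
    fun y hy => hδ0.trans_le (hsph y hy)
  have hFbase : wulffBase R F ⊆ Metric.closedBall 0 (2 * ρ) := fun p hp => by
    rw [mem_closedBall_zero_iff]
    refine hinner p (by positivity) fun y hy => (hp y hy).le.trans ?_
    have h1 := abs_le.mp (abs_real_inner_le_norm w y)
    rw [hy] at h1
    have h2 : ‖w‖ * R ≤ ρ * R := mul_le_mul_of_nonneg_right hwρ hR.le
    have h3 : R * ρ = C := by rw [hρ, mul_div_cancel₀ _ hR.ne']
    have h4 := hfC y hy.le
    simp only [hF]
    linarith
  have hWle : volume.real (wulffBase R F) ≤ W :=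
    ENNReal.toReal_mono (isCompact_closedBall _ _).measure_lt_top.ne (measure_mono hFbase)
  have hTF : T ≤ F 0 := by
    obtain ⟨e, he⟩ := exists_norm_eq (EuclideanSpace ℝ (Fin n)) zero_le_one
    have hFn : 0 < F 0 := hFR.pos_of_sphere_pos hFpos hFR.norm_zero_le
    have h1 := hFR.volume_shell_le hFpos he (L := δ / R) (by positivity) (fun y hy => by
        rw [div_mul_eq_mul_div, div_le_iff₀ hR, mul_comm (F y)]
        have := real_inner_le_norm e y
        rw [he, hy, one_mul] at this
        nlinarith [hsph y hy])
      (ne_top_of_le_ne_top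
        (isCompact_closedBall (0 : EuclideanSpace ℝ (Fin n)) (2 * ρ)).measure_lt_top.ne
        (measure_mono hFbase)) hlo.le (fun z hz => by
        have : hessianMatrix F z = hessianMatrix f z := by
          ext i j
          rw [hessianMatrix, hf.fderiv_fderiv_sub_inner w hz.le, hessianMatrix]
        rw [this]
        exact hdet z hz)
    rw [div_mul_cancel₀ _ hR.ne'] at h1
    have h2 : (n : ℝ) * (2 * F 0 / δ) * volume.real (wulffBase R F) ≤ n * (2 * F 0 / δ) * W := by
      gcongr
    have h3 : lo * β ≤ n * (2 * F 0 / δ) * W := h1.trans h2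
    have h4 : (n : ℝ) * (2 * F 0 / δ) * W = F 0 * (2 * n * W) / δ := by ring
    rw [h4, le_div_iff₀ hδ0] at h3
    rw [hT, div_le_iff₀ (by positivity)]
    linarith
  intro z hz
  have hA : T - 2 * ρ * ‖z‖ ≤ F z := by
    have h1 := hFR.le_of_tangent hFR.norm_zero_le hz
    rw [sub_zero, ← inner_euclideanGrad] at h1
    have h2 := mem_closedBall_zero_iff.mp
      (hFbase (hFR.euclideanGrad_mem (z := 0) (by simpa using hR)))
    have h3 := abs_le.mp (abs_real_inner_le_norm (euclideanGrad F 0) z)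
    have h4 : ‖euclideanGrad F 0‖ * ‖z‖ ≤ 2 * ρ * ‖z‖ := by gcongr
    linarith
  rcases le_or_gt (‖z‖) (T / (4 * ρ)) with hsmall | hlarge
  · refine (min_le_left _ _).trans (le_trans ?_ hA)
    rw [le_div_iff₀ (by positivity)] at hsmall
    linarith
  · refine (min_le_right _ _).trans ?_
    have hz0 : 0 < ‖z‖ := lt_trans (by positivity) hlarge
    obtain ⟨y, hy, hzy⟩ := exists_pos_smul_mem_sphere hR (norm_pos_iff.mp hz0)
    have h1 := hFR.smul_le hy (t := ‖z‖ / R) (by positivity) ((div_le_one hR).mpr hz)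
    rw [← hzy] at h1
    refine le_trans ?_ h1
    calc T * δ / (4 * ρ * R) = T / (4 * ρ) / R * δ := by
          field_simp
      _ ≤ ‖z‖ / R * F y := by
          have := hsph y hy
          gcongr

end IsRobinPotential

end Centroid

section CapGeometry

variable {n : ℕ} {θ : ℝ}

/-- The horizontal embedding of `ℝⁿ` into `ℝⁿ⁺¹`. -/
def horizEmb (n : ℕ) : EuclideanSpace ℝ (Fin n) →ₗᵢ[ℝ] V n where
  toFun z := WithLp.toLp 2 (Fin.snoc (α := fun _ => ℝ) z.ofLp 0)
  map_add' z w := by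
    ext i
    refine Fin.lastCases ?_ (fun j => ?_) i <;> simp
  map_smul' t z := by
    ext i
    refine Fin.lastCases ?_ (fun j => ?_) i <;> simp
  norm_map' z := by
    simp [EuclideanSpace.norm_eq, Fin.sum_univ_castSucc]

@[simp] lemma horizEmb_castSucc (z : EuclideanSpace ℝ (Fin n)) (i : Fin n) :
    horizEmb n z i.castSucc = z i := by
  simp [horizEmb]

@[simp] lemma horizEmb_last (z : EuclideanSpace ℝ (Fin n)) :
    horizEmb n z (Fin.last n) = 0 := by
  simp [horizEmb]

lemma horizEmb_single (i : Fin n) :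
    horizEmb n (EuclideanSpace.single i 1) = EuclideanSpace.single i.castSucc 1 := by
  ext j
  refine Fin.lastCases ?_ (fun j => ?_) j
  · simp [(Fin.castSucc_lt_last i).ne']
  · simp

/-- The horizontal part of a vector. -/
def horizPart (n : ℕ) (x : V n) : EuclideanSpace ℝ (Fin n) :=
  WithLp.toLp 2 fun i => x i.castSucc

lemma horizEmb_horizPart_add (x : V n) :
    horizEmb n (horizPart n x) + x (Fin.last n) • Etop n = x := by
  ext i
  refine Fin.lastCases ?_ (fun j => ?_) i
  · simp [Etop]
  · simp [Etop, horizPart]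

@[simp] lemma Etop_last : Etop n (Fin.last n) = 1 := by simp [Etop]

@[simp] lemma norm_Etop : ‖Etop n‖ = 1 := by simp [Etop]

@[simp] lemma inner_horizEmb_Etop (z : EuclideanSpace ℝ (Fin n)) :
    ⟪horizEmb n z, Etop n⟫ = 0 := by
  simp [Etop, EuclideanSpace.inner_single_right]

lemma norm_sq_horizEmb_add (z : EuclideanSpace ℝ (Fin n)) (a : ℝ) :
    ‖horizEmb n z + a • Etop n‖ ^ 2 = ‖z‖ ^ 2 + a ^ 2 := by
  rw [norm_add_sq_real, inner_smul_right, inner_horizEmb_Etop, norm_smul, norm_Etop,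
    LinearIsometry.norm_map]
  simp

lemma add_smul_Etop_mem_sphCap {ζ : V n} (hζ : ζ ∈ capCap n θ) :
    ζ + cos θ • Etop n ∈ sphCap n θ :=
  ⟨hζ.2, by simpa using hζ.1⟩

lemma sub_smul_Etop_mem_capCap {u : V n} (hu : u ∈ sphCap n θ) :
    u - cos θ • Etop n ∈ capCap n θ :=
  ⟨by simpa using hu.2, by simpa using hu.1⟩

lemma mem_coneCap_iff {x : V n} : x ∈ coneCap n θ ↔ x ≠ 0 ∧ ‖x‖ * cos θ ≤ x (Fin.last n) := by
  constructor
  · rintro ⟨l, hl, u, hu, rfl⟩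
    have hu0 : u ≠ 0 := norm_ne_zero_iff.mp (by rw [hu.1]; exact one_ne_zero)
    refine ⟨smul_ne_zero hl.ne' hu0, ?_⟩
    rw [norm_smul, hu.1, norm_of_nonneg hl.le, mul_one]
    exact mul_le_mul_of_nonneg_left hu.2 hl.le
  · rintro ⟨h0, hx⟩
    have hn : 0 < ‖x‖ := norm_pos_iff.mpr h0
    refine ⟨‖x‖, hn, ‖x‖⁻¹ • x, ⟨?_, ?_⟩, ?_⟩
    · rw [norm_smul, norm_inv, norm_norm, inv_mul_cancel₀ hn.ne']
    · rw [PiLp.smul_apply, smul_eq_mul, ← div_eq_inv_mul, le_div_iff₀ hn, mul_comm]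
      exact hx
    · rw [smul_smul, mul_inv_cancel₀ hn.ne', one_smul]

lemma smul_mem_coneCap {x : V n} (hx : x ∈ coneCap n θ) {l : ℝ} (hl : 0 < l) :
    l • x ∈ coneCap n θ := by
  obtain ⟨a, ha, u, hu, rfl⟩ := hx
  exact ⟨l * a, mul_pos hl ha, u, hu, smul_smul _ _ _⟩

lemma sphCap_subset_coneCap : sphCap n θ ⊆ coneCap n θ :=
  fun u hu => ⟨1, one_pos, u, hu, (one_smul _ _).symm⟩

lemma coneCap_mem_nhds {x : V n} (h0 : x ≠ 0) (hx : ‖x‖ * cos θ < x (Fin.last n)) :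
    coneCap n θ ∈ nhds x := by
  have h1 : ∀ᶠ y in nhds x, y ≠ 0 := isOpen_ne.mem_nhds h0
  have h2 : ∀ᶠ y : V n in nhds x, ‖y‖ * cos θ < y (Fin.last n) :=
    (isOpen_lt (by fun_prop) (by fun_prop)).mem_nhds hx
  filter_upwards [h1, h2] with y hy1 hy2
  exact mem_coneCap_iff.mpr ⟨hy1, hy2.le⟩

namespace IsHomExt

variable {s G : V n → ℝ}

lemma contDiffAt (h : IsHomExt n θ ⊤ s G) {x : V n} (hx : x ∈ coneCap n θ) :
    ContDiffAt ℝ 2 G x := by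
  obtain ⟨⟨U, hU, hsub, hc⟩, -⟩ := h
  exact (hc.contDiffAt (hU.mem_nhds (hsub hx))).of_le
    (WithTop.coe_le_coe.mpr (le_top : (2 : ℕ∞) ≤ ⊤))

lemma differentiableAt (h : IsHomExt n θ ⊤ s G) {x : V n} (hx : x ∈ coneCap n θ) :
    DifferentiableAt ℝ G x :=
  (h.contDiffAt hx).differentiableAt (by norm_num)

lemma differentiableAt_fderiv (h : IsHomExt n θ ⊤ s G) {x : V n} (hx : x ∈ coneCap n θ) :
    DifferentiableAt ℝ (fderiv ℝ G) x :=
  ((h.contDiffAt hx).fderiv_right (m := 1) (by norm_num)).differentiableAt (by norm_num)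

lemma map_smul (h : IsHomExt n θ ⊤ s G) {x : V n} (hx : x ∈ coneCap n θ) {l : ℝ} (hl : 0 < l) :
    G (l • x) = l * G x := by
  obtain ⟨a, ha, u, hu, rfl⟩ := hx
  rw [smul_smul, h.2.1 _ (mul_pos hl ha) u hu, h.2.1 a ha u hu, mul_assoc]

/-- Euler's identity. -/
lemma fderiv_apply_self (h : IsHomExt n θ ⊤ s G) {x : V n} (hx : x ∈ coneCap n θ) :
    fderiv ℝ G x x = G x := by
  have h1 : HasDerivAt (fun t : ℝ => G (t • x)) (fderiv ℝ G x x) 1 := by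
    have h2 : HasDerivAt (fun t : ℝ => t • x) x 1 := by
      simpa using (hasDerivAt_id (1 : ℝ)).smul_const x
    have h3 : HasFDerivAt G (fderiv ℝ G x) ((1 : ℝ) • x) := by
      rw [one_smul]
      exact (h.differentiableAt hx).hasFDerivAt
    exact h3.comp_hasDerivAt (1 : ℝ) h2
  have h4 : HasDerivAt (fun t : ℝ => G (t • x)) (G x) 1 := by
    refine (by simpa using (hasDerivAt_id (1 : ℝ)).mul_const (G x) :
      HasDerivAt (fun t : ℝ => t * G x) (G x) 1).congr_of_eventuallyEq ?_
    filter_upwards [eventually_gt_nhds (zero_lt_one (α := ℝ))] with t ht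
    exact h.map_smul hx ht
  exact h1.unique h4

lemma hessQ_self_self (h : IsHomExt n θ ⊤ s G) {x : V n} (hx : x ∈ coneCap n θ) :
    hessQ n G x x x = 0 := by
  have h1 : HasDerivAt (fun t : ℝ => fderiv ℝ G (t • x) x) (hessQ n G x x x) 1 := by
    have h2 : HasDerivAt (fun t : ℝ => t • x) x 1 := by
      simpa using (hasDerivAt_id (1 : ℝ)).smul_const x
    have h3 : HasFDerivAt (fderiv ℝ G) (fderiv ℝ (fderiv ℝ G) x) ((1 : ℝ) • x) := by
      rw [one_smul]
      exact (h.differentiableAt_fderiv hx).hasFDerivAt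
    exact (ContinuousLinearMap.apply ℝ ℝ x).hasFDerivAt.comp_hasDerivAt (1 : ℝ)
      (h3.comp_hasDerivAt (1 : ℝ) h2)
  have h4 : HasDerivAt (fun t : ℝ => fderiv ℝ G (t • x) x) 0 1 := by
    refine (hasDerivAt_const (1 : ℝ) (G x)).congr_of_eventuallyEq ?_
    filter_upwards [eventually_gt_nhds (zero_lt_one (α := ℝ))] with t ht
    have h5 := h.fderiv_apply_self (smul_mem_coneCap hx ht)
    rw [_root_.map_smul, h.map_smul hx ht, smul_eq_mul] at h5
    exact mul_left_cancel₀ ht.ne' h5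
  exact h1.unique h4

lemma hessQ_comm (h : IsHomExt n θ ⊤ s G) {x : V n} (hx : x ∈ coneCap n θ) (v w : V n) :
    hessQ n G x v w = hessQ n G x w v :=
  ((h.contDiffAt hx).isSymmSndFDerivAt (by simp)) v w

lemma hessQ_eq_dotProduct (G : V n → ℝ) (x v w : V n) :
    hessQ n G x v w = v.ofLp ⬝ᵥ Matrix.mulVec (hessM n G x) w.ofLp := by
  rw [hessQ]
  conv_lhs => rw [← sum_smul_single_eq v]
  simp only [map_sum, _root_.map_smul, sum_apply, smul_apply, smul_eq_mul, dotProduct,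
    Matrix.mulVec, hessM]
  refine Finset.sum_congr rfl fun i _ => ?_
  conv_lhs => rw [← sum_smul_single_eq w]
  simp [mul_comm]

lemma posSemidef_hessM (h : IsHomExt n θ ⊤ s G) (hτ : TauNonneg n θ G) {u : V n}
    (hu : u ∈ sphCap n θ) : (hessM n G u).PosSemidef := by
  refine Matrix.PosSemidef.of_dotProduct_mulVec_nonneg ?_ fun x => ?_
  · ext i j
    exact h.hessQ_comm (sphCap_subset_coneCap hu) _ _
  · have := hτ u hu (WithLp.toLp 2 x)
    rw [hessQ_eq_dotProduct] at this
    simpa using this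

lemma hessM_mulVec_self (h : IsHomExt n θ ⊤ s G) (hτ : TauNonneg n θ G) {u : V n}
    (hu : u ∈ sphCap n θ) : Matrix.mulVec (hessM n G u) u.ofLp = 0 := by
  rw [← (h.posSemidef_hessM hτ hu).dotProduct_mulVec_zero_iff, star_trivial,
    ← hessQ_eq_dotProduct]
  exact h.hessQ_self_self (sphCap_subset_coneCap hu)

lemma hessQ_pos_of_last_eq_zero (h : IsHomExt n θ ⊤ s G) (hτ : TauPos n θ G) {u : V n}
    (hu : u ∈ sphCap n θ) (hu0 : 0 < u (Fin.last n)) {v : V n} (hv : v ≠ 0)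
    (hv0 : v (Fin.last n) = 0) : 0 < hessQ n G u v v := by
  have hzero : ∀ w, hessQ n G u w u = 0 := fun w => by
    rw [hessQ_eq_dotProduct, h.hessM_mulVec_self hτ.1 hu, dotProduct_zero]
  have hzero' : ∀ w, hessQ n G u u w = 0 := fun w => by
    rw [h.hessQ_comm (sphCap_subset_coneCap hu), hzero]
  have hperp : ⟪v - ⟪v, u⟫ • u, u⟫ = 0 := by
    rw [inner_sub_left, inner_smul_left, real_inner_self_eq_norm_sq, hu.1]
    simp
  have hne : v - ⟪v, u⟫ • u ≠ 0 := fun h0 => by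
    have h1 := congrArg (fun x : V n => x (Fin.last n)) h0
    simp only [PiLp.sub_apply, PiLp.smul_apply, hv0, smul_eq_mul, PiLp.zero_apply, zero_sub,
      neg_eq_zero, mul_eq_zero, hu0.ne', or_false] at h1
    rw [h1, zero_smul, sub_zero] at h0
    exact hv h0
  have h2 := hτ.2 u hu _ hne hperp
  have h3 : hessQ n G u (v - ⟪v, u⟫ • u) (v - ⟪v, u⟫ • u) = hessQ n G u v v := by
    have h4 := hzero v
    have h5 := hzero' v
    have h6 := hzero u
    simp only [hessQ] at h4 h5 h6 ⊢
    simp only [map_sub, sub_apply, _root_.map_smul, smul_apply, h4, h5, h6, smul_zero, sub_zero]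
  rwa [h3] at h2

lemma hessQ_smul (h : IsHomExt n θ ⊤ s G) {x : V n} (h0 : x ≠ 0)
    (hx : ‖x‖ * cos θ < x (Fin.last n)) {l : ℝ} (hl : 0 < l) (v w : V n) :
    hessQ n G x v w = l * hessQ n G (l • x) v w := by
  have hnhds := coneCap_mem_nhds h0 hx
  have hev : ∀ᶠ y in nhds x, y ∈ coneCap n θ := hnhds
  have h1 : fderiv ℝ G =ᶠ[nhds x] fun y => fderiv ℝ G (l • y) := by
    filter_upwards [eventually_eventually_nhds.mpr hev] with y hy
    have hy' := hy.self_of_nhds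
    have h2 : HasFDerivAt (fun z => l⁻¹ * G (l • z)) (fderiv ℝ G (l • y)) y := by
      have h3 := ((h.differentiableAt (smul_mem_coneCap hy' hl)).hasFDerivAt.comp y
        ((hasFDerivAt_id y).const_smul l)).const_mul l⁻¹
      refine h3.congr_fderiv ?_
      ext v
      simp [hl.ne']
    have h4 : G =ᶠ[nhds y] fun z => l⁻¹ * G (l • z) := by
      filter_upwards [hy] with z hz
      rw [h.map_smul hz hl, inv_mul_cancel_left₀ hl.ne']
    exact (h2.congr_of_eventuallyEq h4).fderiv
  have h5 : HasFDerivAt (fun y => fderiv ℝ G (l • y))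
      ((fderiv ℝ (fderiv ℝ G) (l • x)).comp (l • ContinuousLinearMap.id ℝ (V n))) x :=
    (h.differentiableAt_fderiv (smul_mem_coneCap hev.self_of_nhds hl)).hasFDerivAt.comp x
      ((hasFDerivAt_id x).const_smul l)
  rw [hessQ, (h5.congr_of_eventuallyEq h1).fderiv]
  simp [hessQ]

end IsHomExt

end CapGeometry

section CapPotential

variable {n : ℕ} {θ : ℝ}

/-- The point above `z` in the horizontal hyperplane at height `cos θ`. -/
def slicePt (n : ℕ) (θ : ℝ) (z : EuclideanSpace ℝ (Fin n)) : V n :=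
  horizEmb n z + cos θ • Etop n

/-- The restriction of a homogeneous function to the hyperplane at height `cos θ`. -/
def capPotential (n : ℕ) (θ : ℝ) (G : V n → ℝ) (z : EuclideanSpace ℝ (Fin n)) : ℝ :=
  G (slicePt n θ z)

@[simp] lemma slicePt_last (z : EuclideanSpace ℝ (Fin n)) :
    slicePt n θ z (Fin.last n) = cos θ := by
  simp [slicePt]

lemma norm_sq_slicePt (z : EuclideanSpace ℝ (Fin n)) :
    ‖slicePt n θ z‖ ^ 2 = ‖z‖ ^ 2 + cos θ ^ 2 :=
  norm_sq_horizEmb_add z _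

lemma cos_pos_of_mem (hθ : θ ∈ Ioo 0 (π / 2)) : 0 < cos θ :=
  cos_pos_of_mem_Ioo ⟨by linarith [hθ.1, pi_pos], hθ.2⟩

lemma sin_pos_of_mem (hθ : θ ∈ Ioo 0 (π / 2)) : 0 < sin θ :=
  sin_pos_of_mem_Ioo ⟨hθ.1, by linarith [hθ.2, pi_pos]⟩

lemma slicePt_ne_zero (hθ : θ ∈ Ioo 0 (π / 2)) (z : EuclideanSpace ℝ (Fin n)) :
    slicePt n θ z ≠ 0 := fun h => by
  have := congrArg (fun x : V n => x (Fin.last n)) h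
  simp only [slicePt_last, PiLp.zero_apply] at this
  exact (cos_pos_of_mem hθ).ne' this

lemma norm_slicePt_le {z : EuclideanSpace ℝ (Fin n)}
    (hz : ‖z‖ ≤ sin θ) : ‖slicePt n θ z‖ ≤ 1 := by
  refine (sq_le_one_iff₀ (norm_nonneg _)).mp ?_
  rw [norm_sq_slicePt]
  nlinarith [sin_sq_add_cos_sq θ, norm_nonneg z]

lemma norm_slicePt_lt {z : EuclideanSpace ℝ (Fin n)}
    (hz : ‖z‖ < sin θ) : ‖slicePt n θ z‖ < 1 := by
  refine (sq_lt_one_iff₀ (norm_nonneg _)).mp ?_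
  rw [norm_sq_slicePt]
  nlinarith [sin_sq_add_cos_sq θ, norm_nonneg z]

lemma cos_le_norm_slicePt (hθ : θ ∈ Ioo 0 (π / 2)) (z : EuclideanSpace ℝ (Fin n)) :
    cos θ ≤ ‖slicePt n θ z‖ := by
  refine (sq_le_sq₀ (cos_pos_of_mem hθ).le (norm_nonneg _)).mp ?_
  rw [norm_sq_slicePt]
  nlinarith [sq_nonneg ‖z‖]

lemma slicePt_mem_sphCapBdry {z : EuclideanSpace ℝ (Fin n)} (hz : ‖z‖ = sin θ) :
    slicePt n θ z ∈ sphCapBdry n θ := by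
  refine ⟨?_, slicePt_last z⟩
  have h := norm_sq_slicePt (θ := θ) z
  rw [hz, sin_sq_add_cos_sq] at h
  exact (pow_eq_one_iff_of_nonneg (norm_nonneg _) two_ne_zero).mp h

lemma slicePt_mem_coneCap (hθ : θ ∈ Ioo 0 (π / 2)) {z : EuclideanSpace ℝ (Fin n)}
    (hz : ‖z‖ ≤ sin θ) : slicePt n θ z ∈ coneCap n θ := by
  refine mem_coneCap_iff.mpr ⟨slicePt_ne_zero hθ z, ?_⟩
  rw [slicePt_last]
  nlinarith [norm_slicePt_le hz, cos_pos_of_mem hθ]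

/-- Points of the spherical cap are the normalized points of the slice. -/
lemma exists_eq_smul_slicePt (hθ : θ ∈ Ioo 0 (π / 2)) {u : V n} (hu : u ∈ sphCap n θ) :
    ∃ l z, 1 ≤ l ∧ l ≤ (cos θ)⁻¹ ∧ ‖z‖ ≤ sin θ ∧ u = l • slicePt n θ z := by
  have hc := cos_pos_of_mem hθ
  have hu0 : 0 < u (Fin.last n) := hc.trans_le hu.2
  have hu1 : u (Fin.last n) ≤ 1 := by
    have := PiLp.norm_apply_le u (Fin.last n)
    rw [hu.1, Real.norm_eq_abs] at this
    exact (le_abs_self _).trans this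
  have hdec : u = (u (Fin.last n) / cos θ) •
      slicePt n θ ((cos θ / u (Fin.last n)) • horizPart n u) := by
    conv_lhs => rw [← horizEmb_horizPart_add u]
    rw [slicePt, smul_add, _root_.map_smul, smul_smul, smul_smul, div_mul_div_comm,
      mul_comm (u (Fin.last n)), div_self (by positivity), one_smul, div_mul_cancel₀ _ hc.ne']
  refine ⟨_, _, (one_le_div hc).mpr hu.2, ?_, ?_, hdec⟩
  · rw [div_eq_mul_inv]
    nlinarith [inv_pos.mpr hc]
  · set z := (cos θ / u (Fin.last n)) • horizPart n u
    have h1 := congrArg (fun x => ‖x‖ ^ 2) hdec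
    simp only [hu.1, norm_smul, mul_pow, norm_sq_slicePt] at h1
    have h2 : 1 ≤ ‖u (Fin.last n) / cos θ‖ ^ 2 := by
      rw [norm_of_nonneg (by positivity)]
      exact one_le_pow₀ ((one_le_div hc).mpr hu.2)
    refine (sq_le_sq₀ (norm_nonneg _) (sin_pos_of_mem hθ).le).mp ?_
    nlinarith [sin_sq_add_cos_sq θ, sq_nonneg ‖z‖, sq_nonneg (cos θ)]

lemma exists_smul_slicePt_mem (hθ : θ ∈ Ioo 0 (π / 2)) {z : EuclideanSpace ℝ (Fin n)}
    (hz : ‖z‖ ≤ sin θ) :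
    ∃ l, 1 ≤ l ∧ l ≤ (cos θ)⁻¹ ∧ l • slicePt n θ z ∈ sphCap n θ := by
  have hc := cos_pos_of_mem hθ
  have h1 := cos_le_norm_slicePt hθ z
  have h2 := norm_slicePt_le hz
  have h0 : 0 < ‖slicePt n θ z‖ := hc.trans_le h1
  have h3 : 1 ≤ ‖slicePt n θ z‖⁻¹ := (one_le_inv₀ h0).mpr h2
  refine ⟨_, h3, inv_anti₀ hc h1, ?_, ?_⟩
  · rw [norm_smul, norm_inv, norm_norm, inv_mul_cancel₀ h0.ne']
  · rw [PiLp.smul_apply, slicePt_last, smul_eq_mul]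
    nlinarith

lemma sigmaElem_eq_principalMinorSum {k : ℕ} (hk : k ≤ n) (G : V n → ℝ) (u : V n) :
    sigmaElem n k G u = principalMinorSum k (hessM n G u) := by
  have := neg_one_pow_mul_charpoly_coeff (hessM n G u) (k := k) (by simp; omega)
  rwa [Fintype.card_fin] at this

namespace IsHomExt

variable {s G : V n → ℝ}

lemma contDiffAt_translate (h : IsHomExt n θ ⊤ s G) (hθ : θ ∈ Ioo 0 (π / 2))
    {z : EuclideanSpace ℝ (Fin n)} (hz : ‖z‖ ≤ sin θ) :
    ContDiffAt ℝ 2 (fun y => G (y + cos θ • Etop n)) (horizEmb n z) :=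
  (h.contDiffAt (slicePt_mem_coneCap hθ hz)).comp (horizEmb n z)
    (contDiff_id.add contDiff_const).contDiffAt

lemma fderiv_capPotential (h : IsHomExt n θ ⊤ s G) (hθ : θ ∈ Ioo 0 (π / 2))
    {z : EuclideanSpace ℝ (Fin n)} (hz : ‖z‖ ≤ sin θ) (v : EuclideanSpace ℝ (Fin n)) :
    fderiv ℝ (capPotential n θ G) z v = fderiv ℝ G (slicePt n θ z) (horizEmb n v) := by
  have h1 := fderiv_comp_linearIsometry (J := horizEmb n) (z := z)
    ((h.contDiffAt_translate hθ hz).differentiableAt (by norm_num)) v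
  rw [fderiv_comp_add_right] at h1
  exact h1

lemma fderiv_fderiv_capPotential (h : IsHomExt n θ ⊤ s G) (hθ : θ ∈ Ioo 0 (π / 2))
    {z : EuclideanSpace ℝ (Fin n)} (hz : ‖z‖ ≤ sin θ) (v w : EuclideanSpace ℝ (Fin n)) :
    fderiv ℝ (fderiv ℝ (capPotential n θ G)) z v w =
      hessQ n G (slicePt n θ z) (horizEmb n v) (horizEmb n w) := by
  have h1 := fderiv_fderiv_comp_linearIsometry (J := horizEmb n) (z := z)
    (h.contDiffAt_translate hθ hz) v w
  have h2 : fderiv ℝ (fun y => G (y + cos θ • Etop n)) =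
      fun y => fderiv ℝ G (y + cos θ • Etop n) :=
    funext fun y => fderiv_comp_add_right _
  rw [h2, fderiv_comp_add_right] at h1
  exact h1

/-- The Hessian of the slice restriction in terms of the Hessian on the spherical cap. -/
lemma exists_hessian_capPotential_eq (h : IsHomExt n θ ⊤ s G) (hθ : θ ∈ Ioo 0 (π / 2))
    {z : EuclideanSpace ℝ (Fin n)} (hz : ‖z‖ < sin θ) :
    ∃ l, ∃ u ∈ sphCap n θ, 1 ≤ l ∧ l ≤ (cos θ)⁻¹ ∧ ∀ v w : EuclideanSpace ℝ (Fin n),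
      fderiv ℝ (fderiv ℝ (capPotential n θ G)) z v w =
        l * hessQ n G u (horizEmb n v) (horizEmb n w) := by
  obtain ⟨l, hl1, hl2, hl⟩ := exists_smul_slicePt_mem hθ hz.le
  refine ⟨l, _, hl, hl1, hl2, fun v w => ?_⟩
  rw [h.fderiv_fderiv_capPotential hθ hz.le]
  refine h.hessQ_smul (slicePt_ne_zero hθ z) ?_ (one_pos.trans_le hl1) _ _
  rw [slicePt_last]
  nlinarith [norm_slicePt_lt hz, cos_pos_of_mem hθ]

lemma isRobinPotential (h : IsHomExt n θ ⊤ s G) (hθ : θ ∈ Ioo 0 (π / 2))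
    (hcap : IsCapillaryF n θ G) (hτ : TauPos n θ G) :
    IsRobinPotential (sin θ) (capPotential n θ G) where
  radius_pos := sin_pos_of_mem hθ
  smooth := by
    obtain ⟨U, hU, hsub, hc⟩ := h.1
    have hsm : ContDiff ℝ 2 (slicePt n θ) :=
      (horizEmb n).toContinuousLinearMap.contDiff.add contDiff_const
    refine ⟨slicePt n θ ⁻¹' U, hU.preimage hsm.continuous, fun z hz =>
      hsub (slicePt_mem_coneCap hθ (by simpa using hz)), ?_⟩
    exact (hc.of_le (WithTop.coe_le_coe.mpr (le_top : (2 : ℕ∞) ≤ ⊤))).comp hsm.contDiffOn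
      fun x hx => hx
  hess_pos z hz v hv := by
    obtain ⟨l, u, hu, hl1, -, hl⟩ := h.exists_hessian_capPotential_eq hθ hz
    rw [hl]
    exact mul_pos (one_pos.trans_le hl1) (h.hessQ_pos_of_last_eq_zero hτ hu
      ((cos_pos_of_mem hθ).trans_le hu.2)
      ((map_ne_zero_iff _ (horizEmb n).injective).mpr hv) (horizEmb_last v))
  robin z hz := by
    rw [h.fderiv_capPotential hθ hz.le]
    have h1 := h.fderiv_apply_self (slicePt_mem_coneCap hθ hz.le)
    conv_lhs at h1 => rw [slicePt, map_add, _root_.map_smul]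
    have h2 := hcap _ (slicePt_mem_sphCapBdry hz)
    rw [slicePt] at h2
    rw [h2, smul_zero, add_zero] at h1
    exact h1

lemma abs_gram_det_le (h : IsHomExt n θ ⊤ s G) (hθ : θ ∈ Ioo 0 (π / 2)) (hτ : TauNonneg n θ G)
    {k : ℕ} (hk : k ≤ n) {M : ℝ} (hM : ∀ u ∈ sphCap n θ, sigmaElem n k G u ≤ M)
    {v : Fin k → EuclideanSpace ℝ (Fin n)} (hv : Orthonormal ℝ v)
    {z : EuclideanSpace ℝ (Fin n)} (hz : ‖z‖ < sin θ) :
    |(Matrix.of fun i j => fderiv ℝ (fderiv ℝ (capPotential n θ G)) z (v i) (v j)).det| ≤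
      (cos θ)⁻¹ ^ k * M := by
  obtain ⟨l, u, hu, hl1, hl2, hl⟩ := h.exists_hessian_capPotential_eq hθ hz
  have hl0 : 0 < l := one_pos.trans_le hl1
  have hH := h.posSemidef_hessM hτ hu
  set A : Matrix (Fin k) (Fin k) ℝ := Matrix.of fun i j =>
    (horizEmb n (v i)).ofLp ⬝ᵥ Matrix.mulVec (hessM n G u) (horizEmb n (v j)).ofLp with hA
  have h1 : (Matrix.of fun i j => fderiv ℝ (fderiv ℝ (capPotential n θ G)) z (v i) (v j)) =
      l • A := by
    ext i j
    rw [Matrix.of_apply, hl, hessQ_eq_dotProduct]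
    rfl
  have hA0 : 0 ≤ A.det := by
    set B : Matrix (Fin (n + 1)) (Fin k) ℝ := Matrix.of fun i j => horizEmb n (v j) i
    have h2 : A = B.conjTranspose * hessM n G u * B := by
      ext i j
      rw [Matrix.mul_assoc]
      rfl
    rw [h2]
    exact (hH.conjTranspose_mul_mul_same _).det_nonneg
  have hAM : A.det ≤ M := by
    refine (det_gram_le_principalMinorSum hH (v := fun i => horizEmb n (v i))
      (hv.comp_linearIsometry (horizEmb n))).trans ?_
    rw [← sigmaElem_eq_principalMinorSum hk]
    exact hM u hu
  rw [h1, Matrix.det_smul, Fintype.card_fin, abs_of_nonneg (by positivity)]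
  exact mul_le_mul (pow_le_pow_left₀ hl0.le hl2 k) hAM hA0
    (pow_nonneg (hl0.le.trans hl2) k)

lemma le_det_hessianMatrix_add (h : IsHomExt n θ ⊤ s G) (hθ : θ ∈ Ioo 0 (π / 2))
    (hτ : TauNonneg n θ G) {k : ℕ} (hk : k ≤ n) {m : ℝ} (hm : 0 ≤ m)
    (hmG : ∀ u ∈ sphCap n θ, m ≤ sigmaElem n k G u) {ε : ℝ} (hε : 0 < ε)
    {z : EuclideanSpace ℝ (Fin n)} (hz : ‖z‖ < sin θ) :
    cos θ ^ 2 * m * ε ^ (n - k) ≤ (hessianMatrix (capPotential n θ G) z +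
      ε • (1 : Matrix (Fin n) (Fin n) ℝ)).det := by
  obtain ⟨l, u, hu, hl1, hl2, hl⟩ := h.exists_hessian_capPotential_eq hθ hz
  have hl0 : 0 < l := one_pos.trans_le hl1
  have hc := cos_pos_of_mem hθ
  have h1 : hessianMatrix (capPotential n θ G) z + ε • (1 : Matrix (Fin n) (Fin n) ℝ) =
      l • ((hessM n G u).submatrix Fin.castSucc Fin.castSucc + (ε / l) • 1) := by
    rw [smul_add, smul_smul, mul_div_cancel₀ _ hl0.ne']
    congr 1
    ext i j
    rw [hessianMatrix, hl, horizEmb_single, horizEmb_single]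
    rfl
  have h2 := le_det_block_add hk (h.posSemidef_hessM hτ hu) (h.hessM_mulVec_self hτ hu) (by
    have := real_inner_self_eq_norm_sq u
    rw [hu.1, one_pow, EuclideanSpace.inner_eq_star_dotProduct, star_trivial] at this
    exact this) (div_pos hε hl0)
  rw [← sigmaElem_eq_principalMinorSum hk] at h2
  rw [h1, Matrix.det_smul, Fintype.card_fin]
  calc cos θ ^ 2 * m * ε ^ (n - k)
      ≤ l ^ k * (u (Fin.last n) ^ 2 * sigmaElem n k G u * ε ^ (n - k)) := by
        have h3 : cos θ ^ 2 * m * ε ^ (n - k) ≤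
            u (Fin.last n) ^ 2 * sigmaElem n k G u * ε ^ (n - k) := by
          have := hu.2
          have := hmG u hu
          gcongr
        have h4 : 1 ≤ l ^ k := one_le_pow₀ hl1
        have h5 : 0 ≤ cos θ ^ 2 * m * ε ^ (n - k) := by positivity
        nlinarith
    _ = l ^ n * (u (Fin.last n) ^ 2 * sigmaElem n k G u * (ε / l) ^ (n - k)) := by
        have h3 : l ^ n = l ^ k * l ^ (n - k) := by rw [← pow_add]; congr 1; omega
        rw [h3, div_pow]
        field_simp
    _ ≤ _ := by gcongr

lemma le_det_hessianMatrix (h : IsHomExt n θ ⊤ s G) (hθ : θ ∈ Ioo 0 (π / 2))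
    (hτ : TauNonneg n θ G) {m : ℝ} (hm : 0 ≤ m)
    (hmG : ∀ u ∈ sphCap n θ, m ≤ sigmaElem n n G u)
    {z : EuclideanSpace ℝ (Fin n)} (hz : ‖z‖ < sin θ) :
    cos θ ^ 2 * m ≤ (hessianMatrix (capPotential n θ G) z).det := by
  have hcont : Continuous fun ε : ℝ => (hessianMatrix (capPotential n θ G) z +
      ε • (1 : Matrix (Fin n) (Fin n) ℝ)).det :=
    (continuous_const.add (continuous_id.smul continuous_const)).matrix_det
  have hlim := (hcont.tendsto 0).mono_left (nhdsWithin_le_nhds (s := Ioi 0))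
  rw [zero_smul, add_zero] at hlim
  refine ge_of_tendsto hlim ?_
  filter_upwards [self_mem_nhdsWithin] with ε hε
  simpa using h.le_det_hessianMatrix_add hθ hτ le_rfl hm hmG hε hz

end IsHomExt

end CapPotential

section Orthogonality

variable {n : ℕ} {θ : ℝ}

lemma isClosed_capCap : IsClosed (capCap n θ) := by
  have h1 : IsClosed {ζ : V n | 0 ≤ ζ (Fin.last n)} := isClosed_le (by fun_prop) (by fun_prop)
  have h2 : IsClosed {ζ : V n | ‖ζ + cos θ • Etop n‖ = 1} :=
    isClosed_eq (by fun_prop) (by fun_prop)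
  exact h1.inter h2

lemma isCompact_capCap : IsCompact (capCap n θ) := by
  refine (isCompact_closedBall (-(cos θ • Etop n)) 1).of_isClosed_subset isClosed_capCap
    fun ζ hζ => ?_
  rw [mem_closedBall_iff_norm, sub_neg_eq_add, hζ.2]

lemma lipschitzWith_horizPart : LipschitzWith 1 (horizPart n) := by
  refine LipschitzWith.of_dist_le_mul fun x y => ?_
  rw [NNReal.coe_one, one_mul, dist_eq_norm, dist_eq_norm,
    show horizPart n x - horizPart n y = horizPart n (x - y) from rfl]
  refine (sq_le_sq₀ (norm_nonneg _) (norm_nonneg _)).mp ?_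
  conv_rhs => rw [← horizEmb_horizPart_add (x - y), norm_sq_horizEmb_add]
  linarith [sq_nonneg ((x - y) (Fin.last n))]

lemma hausdorffMeasure_capCap_lt_top (hθ : θ ∈ Ioo 0 (π / 2)) :
    μH[(n : ℝ)] (capCap n θ) < ⊤ := by
  set N : EuclideanSpace ℝ (Fin n) → V n := fun z =>
    ‖slicePt n θ z‖⁻¹ • slicePt n θ z - cos θ • Etop n with hN
  have hsm : ContDiff ℝ 1 (slicePt n θ) :=
    (horizEmb n).toContinuousLinearMap.contDiff.add contDiff_const
  have hNsm : ContDiff ℝ 1 N :=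
    (((hsm.norm ℝ (slicePt_ne_zero hθ)).inv
      fun z => norm_ne_zero_iff.mpr (slicePt_ne_zero hθ z)).smul hsm).sub contDiff_const
  have hcpt := isCompact_closedBall (0 : EuclideanSpace ℝ (Fin n)) (sin θ)
  obtain ⟨K, hK⟩ := hNsm.contDiffOn.exists_lipschitzOnWith one_ne_zero
    (convex_closedBall (0 : EuclideanSpace ℝ (Fin n)) (sin θ)) hcpt
  have hsub : capCap n θ ⊆ N '' Metric.closedBall 0 (sin θ) := by
    intro ζ hζ
    obtain ⟨l, z, hl1, -, hz, hlz⟩ := exists_eq_smul_slicePt hθ (add_smul_Etop_mem_sphCap hζ)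
    refine ⟨z, by simpa using hz, ?_⟩
    have hl0 : 0 < l := one_pos.trans_le hl1
    have h1 : l * ‖slicePt n θ z‖ = 1 := by
      rw [← hζ.2, hlz, norm_smul, norm_of_nonneg hl0.le]
    have h2 : ‖slicePt n θ z‖⁻¹ = l := by
      rw [inv_eq_iff_eq_inv]
      exact eq_inv_of_mul_eq_one_right h1
    simp only [hN]
    rw [h2, ← hlz, add_sub_cancel_right]
  refine (measure_mono hsub).trans_lt ((hK.hausdorffMeasure_image_le n.cast_nonneg).trans_lt ?_)
  exact ENNReal.mul_lt_top (ENNReal.rpow_lt_top_of_nonneg n.cast_nonneg ENNReal.coe_ne_top)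
    hcpt.measure_lt_top

lemma hausdorffMeasure_halfCap_pos (hθ : θ ∈ Ioo 0 (π / 2)) {e : EuclideanSpace ℝ (Fin n)}
    (he : ‖e‖ = 1) : 0 < μH[(n : ℝ)] {ζ | ζ ∈ capCap n θ ∧ 0 < ⟪horizEmb n e, ζ⟫} := by
  have hs := sin_pos_of_mem hθ
  set U : Set (EuclideanSpace ℝ (Fin n)) := {z | ‖z‖ < sin θ ∧ 0 < ⟪e, z⟫} with hU
  have hUo : IsOpen U := by
    have h1 : IsOpen {z : EuclideanSpace ℝ (Fin n) | ‖z‖ < sin θ} :=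
      isOpen_lt (by fun_prop) (by fun_prop)
    have h2 : IsOpen {z : EuclideanSpace ℝ (Fin n) | 0 < ⟪e, z⟫} :=
      isOpen_lt (by fun_prop) (by fun_prop)
    exact h1.inter h2
  have hUne : U.Nonempty := by
    refine ⟨(sin θ / 2) • e, ?_, ?_⟩
    · rw [norm_smul, he, norm_of_nonneg (by positivity)]
      linarith
    · rw [inner_smul_right, real_inner_self_eq_norm_sq, he]
      positivity
  have hsub : U ⊆ horizPart n '' {ζ | ζ ∈ capCap n θ ∧ 0 < ⟪horizEmb n e, ζ⟫} := by
    rintro z ⟨hz, hez⟩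
    have hcos : cos θ ^ 2 ≤ 1 - ‖z‖ ^ 2 := by
      nlinarith [sin_sq_add_cos_sq θ, norm_nonneg z]
    refine ⟨horizEmb n z + (√(1 - ‖z‖ ^ 2) - cos θ) • Etop n, ⟨⟨?_, ?_⟩, ?_⟩, ?_⟩
    · simpa using Real.le_sqrt_of_sq_le hcos
    · rw [add_assoc, ← add_smul, sub_add_cancel]
      refine (pow_eq_one_iff_of_nonneg (norm_nonneg _) two_ne_zero).mp ?_
      rw [norm_sq_horizEmb_add, Real.sq_sqrt (by nlinarith), add_sub_cancel]
    · rw [inner_add_right, inner_smul_right, inner_horizEmb_Etop, mul_zero, add_zero,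
        LinearIsometry.inner_map_map]
      exact hez
    · ext i
      simp [horizPart, Etop]
  have h1 := (measure_mono (μ := μH[(n : ℝ)]) hsub).trans
    (lipschitzWith_horizPart.hausdorffMeasure_image_le n.cast_nonneg _)
  rw [ENNReal.coe_one, ENNReal.one_rpow, one_mul] at h1
  exact (hUo.measure_pos _ hUne).trans_le h1

lemma reflection_orthogonal_apply_of_norm_eq_one {E : Type*} [NormedAddCommGroup E]
    [InnerProductSpace ℝ E] {a : E} (ha : ‖a‖ = 1) (x : E) :
    (ℝ ∙ a)ᗮ.reflection x = x - (2 * ⟪a, x⟫) • a := by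
  rw [Submodule.reflection_orthogonal_apply, Submodule.reflection_singleton_apply, ha]
  simp only [RCLike.ofReal_one, one_pow, div_one]
  rw [neg_sub, two_smul, two_mul, add_smul]

lemma inner_horizEmb (e : EuclideanSpace ℝ (Fin n)) (ζ : V n) :
    ⟪horizEmb n e, ζ⟫ = ∑ i : Fin n, e i * ζ i.castSucc := by
  simp [PiLp.inner_apply, Fin.sum_univ_castSucc, mul_comm]

lemma IsRobinPotential.lt_reflect {R : ℝ} {f : EuclideanSpace ℝ (Fin n) → ℝ}
    [Nontrivial (EuclideanSpace ℝ (Fin n))]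
    (hf : IsRobinPotential R f) {y : EuclideanSpace ℝ (Fin n)} (hy : ‖y‖ = R) (hfy : f y ≤ 0)
    {e : EuclideanSpace ℝ (Fin n)} (he : ‖e‖ = 1) (hye : y = R • e)
    {z : EuclideanSpace ℝ (Fin n)} (hz : ‖z‖ ≤ R) (hez : 0 < ⟪e, z⟫) :
    f z < f (z - (2 * ⟪e, z⟫) • e) := by
  have hR := hf.radius_pos
  have hnorm : ‖z - (2 * ⟪e, z⟫) • e‖ ≤ R := by
    rw [← reflection_orthogonal_apply_of_norm_eq_one he, LinearIsometryEquiv.norm_map]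
    exact hz
  have hne : z ≠ z - (2 * ⟪e, z⟫) • e := fun h => by
    have h1 : (2 * ⟪e, z⟫) • e = 0 := sub_eq_self.mp h.symm
    rcases smul_eq_zero.mp h1 with h2 | h2
    · linarith
    · rw [h2, norm_zero] at he
      exact zero_ne_one he
  have h1 := hf.lt_of_ne hz hnorm hne
  have h2 : fderiv ℝ f z y ≤ 0 := by
    rcases hz.lt_or_eq with h | h
    · exact (hf.fderiv_lt_of_sphere h hy).le.trans hfy
    · exact (hf.fderiv_le_of_sphere h hy.le).trans hfy
  rw [hye, map_smul, smul_eq_mul] at h2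
  have h3 : fderiv ℝ f z e ≤ 0 := by
    by_contra hcon
    push Not at hcon
    nlinarith
  rw [sub_sub_cancel_left, map_neg, map_smul, smul_eq_mul] at h1
  nlinarith

namespace IsHomExt

variable {s G : V n → ℝ}

lemma capPotential_pos_of_sphere (h : IsHomExt n θ ⊤ s G) (hn : 0 < n) (hθ : θ ∈ Ioo 0 (π / 2))
    (hcap : IsCapillaryF n θ G) (hτ : TauPos n θ G)
    (horth : ∀ i : Fin (n + 1), i ≠ Fin.last n →
      ∫ ζ in capCap n θ, s ζ * ζ i ∂μH[(n : ℝ)] = 0)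
    {y : EuclideanSpace ℝ (Fin n)} (hy : ‖y‖ = sin θ) : 0 < capPotential n θ G y := by
  have := nontrivial_euclideanSpace hn
  have hR := sin_pos_of_mem hθ
  have hf := h.isRobinPotential hθ hcap hτ
  by_contra! hfy
  set e := (sin θ)⁻¹ • y with hedef
  have he : ‖e‖ = 1 := by
    rw [hedef, norm_smul, norm_inv, norm_of_nonneg hR.le, hy, inv_mul_cancel₀ hR.ne']
  have hye : y = sin θ • e := by rw [hedef, smul_smul, mul_inv_cancel₀ hR.ne', one_smul]
  set a := horizEmb n e with ha
  have ha1 : ‖a‖ = 1 := by rw [ha, LinearIsometry.norm_map, he]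
  set ρ := (ℝ ∙ a)ᗮ.reflection with hρ
  have hρx : ∀ x, ρ x = x - (2 * ⟪a, x⟫) • a := reflection_orthogonal_apply_of_norm_eq_one ha1
  have hρE : ρ (Etop n) = Etop n := by
    rw [hρx, ha, inner_horizEmb_Etop, mul_zero, zero_smul, sub_zero]
  have hρlast : ∀ x, ρ x (Fin.last n) = x (Fin.last n) := fun x => by
    rw [hρx]
    simp [ha]
  have hρinner : ∀ x, ⟪a, ρ x⟫ = -⟪a, x⟫ := fun x => by
    rw [hρx, inner_sub_right, inner_smul_right, real_inner_self_eq_norm_sq, ha1]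
    ring
  have hρinv : ∀ x, ρ (ρ x) = x := fun x => Submodule.reflection_reflection _ x
  have hρcap : ∀ ζ, ρ ζ ∈ capCap n θ ↔ ζ ∈ capCap n θ := fun ζ => by
    have h1 : ρ ζ + cos θ • Etop n = ρ (ζ + cos θ • Etop n) := by
      rw [map_add, _root_.map_smul, hρE]
    simp only [capCap, mem_ofPred_eq, hρlast, h1, LinearIsometryEquiv.norm_map]
  set μ : Measure (V n) := μH[(n : ℝ)] with hμ
  have hmp : MeasurePreserving ρ μ μ :=
    ρ.toIsometryEquiv.measurePreserving_hausdorffMeasure (n : ℝ)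
  have hpre : ρ ⁻¹' capCap n θ = capCap n θ := Set.ext hρcap
  have hscont : ContinuousOn s (capCap n θ) := by
    have h1 : ContinuousOn (fun ζ => G (ζ + cos θ • Etop n)) (capCap n θ) := fun ζ hζ =>
      ((h.contDiffAt (sphCap_subset_coneCap (add_smul_Etop_mem_sphCap hζ))).continuousAt.comp
        (f := fun ζ => ζ + cos θ • Etop n) (by fun_prop)).continuousWithinAt
    exact h1.congr fun ζ hζ => (h.2.2 ζ hζ).symm
  have hfin : IsFiniteMeasure (μ.restrict (capCap n θ)) :=
    ⟨by rw [Measure.restrict_apply_univ]; exact hausdorffMeasure_capCap_lt_top hθ⟩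
  have hint : ∀ g : V n → ℝ, ContinuousOn g (capCap n θ) → IntegrableOn g (capCap n θ) μ := by
    intro g hg
    have h1 := hg.integrableOn_compact' (μ := μ.restrict (capCap n θ)) isCompact_capCap
      isClosed_capCap.measurableSet
    rwa [IntegrableOn, Measure.restrict_restrict isClosed_capCap.measurableSet, inter_self] at h1
  have hI : ∫ ζ in capCap n θ, s ζ * ⟪a, ζ⟫ ∂μ = 0 := by
    have h1 : ∀ ζ : V n, s ζ * ⟪a, ζ⟫ = ∑ i : Fin n, e i * (s ζ * ζ i.castSucc) := fun ζ => by
      rw [ha, inner_horizEmb, Finset.mul_sum]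
      exact Finset.sum_congr rfl fun i _ => by ring
    simp only [h1]
    rw [integral_finsetSum]
    · refine Finset.sum_eq_zero fun i _ => ?_
      rw [integral_const_mul, horth _ (Fin.castSucc_lt_last i).ne, mul_zero]
    · exact fun i _ => (hint _ (hscont.mul (by fun_prop))).const_mul _
  have hsρ : ContinuousOn (fun ζ => s (ρ ζ)) (capCap n θ) :=
    hscont.comp ρ.continuous.continuousOn fun ζ hζ => (hρcap ζ).mpr hζ
  have hI' : ∫ ζ in capCap n θ, s (ρ ζ) * ⟪a, ζ⟫ ∂μ = 0 := by
    have h1 := hmp.setIntegral_preimage_emb ρ.toHomeomorph.measurableEmbedding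
      (fun ζ => s ζ * ⟪a, ζ⟫) (capCap n θ)
    rw [hpre, hI] at h1
    simp only [hρinner, mul_neg] at h1
    rwa [integral_neg, neg_eq_zero] at h1
  have hlt : ∀ ζ ∈ capCap n θ, 0 < ⟪a, ζ⟫ → s ζ < s (ρ ζ) := by
    intro ζ hζ hpos
    obtain ⟨l, z, hl1, -, hz, hlz⟩ := exists_eq_smul_slicePt hθ (add_smul_Etop_mem_sphCap hζ)
    have hl0 : 0 < l := one_pos.trans_le hl1
    have hρslice : ρ (slicePt n θ z) = slicePt n θ (z - (2 * ⟪e, z⟫) • e) := by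
      rw [slicePt, map_add, _root_.map_smul, hρE, hρx, ha, LinearIsometry.inner_map_map, slicePt,
        map_sub, _root_.map_smul (horizEmb n) (2 * ⟪e, z⟫) e]
    have hez : 0 < ⟪e, z⟫ := by
      have h1 : ⟪a, ζ + cos θ • Etop n⟫ = l * ⟪e, z⟫ := by
        rw [hlz, inner_smul_right, slicePt, inner_add_right, inner_smul_right, ha,
          inner_horizEmb_Etop, LinearIsometry.inner_map_map, mul_zero, add_zero]
      rw [inner_add_right, inner_smul_right, ha, inner_horizEmb_Etop, mul_zero, add_zero] at h1
      rw [h1] at hpos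
      exact pos_of_mul_pos_right hpos hl0.le
    have hz' : ‖z - (2 * ⟪e, z⟫) • e‖ ≤ sin θ := by
      rw [← reflection_orthogonal_apply_of_norm_eq_one he, LinearIsometryEquiv.norm_map]
      exact hz
    have h1 := hf.lt_reflect hy hfy he hye hz hez
    rw [← h.2.2 ζ hζ, ← h.2.2 _ ((hρcap ζ).mpr hζ),
      show ρ ζ + cos θ • Etop n = ρ (ζ + cos θ • Etop n) by
        rw [map_add, _root_.map_smul, hρE], hlz, _root_.map_smul, hρslice,
      h.map_smul (slicePt_mem_coneCap hθ hz) hl0, h.map_smul (slicePt_mem_coneCap hθ hz') hl0]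
    exact mul_lt_mul_of_pos_left h1 hl0
  have hnonneg : ∀ ζ ∈ capCap n θ, 0 ≤ (s (ρ ζ) - s ζ) * ⟪a, ζ⟫ := by
    intro ζ hζ
    rcases lt_trichotomy 0 (⟪a, ζ⟫ : ℝ) with hpos | hzero | hneg
    · exact (mul_pos (sub_pos.mpr (hlt ζ hζ hpos)) hpos).le
    · rw [← hzero, mul_zero]
    · have h1 := hlt (ρ ζ) ((hρcap ζ).mpr hζ) (by rw [hρinner]; linarith)
      rw [hρinv] at h1
      nlinarith
  have hintd : IntegrableOn (fun ζ => (s (ρ ζ) - s ζ) * ⟪a, ζ⟫) (capCap n θ) μ :=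
    hint _ ((hsρ.sub hscont).mul (by fun_prop))
  have hzero : ∫ ζ in capCap n θ, (s (ρ ζ) - s ζ) * ⟪a, ζ⟫ ∂μ = 0 := by
    simp only [sub_mul]
    have ha' : ContinuousOn (fun ζ : V n => (⟪a, ζ⟫ : ℝ)) (capCap n θ) := by fun_prop
    exact (integral_sub (hint _ (hsρ.mul ha')) (hint _ (hscont.mul ha'))).trans (by
      simp only [Pi.mul_apply]
      rw [hI, hI', sub_zero])
  have hmeas := isClosed_capCap (n := n) (θ := θ) |>.measurableSet
  rw [setIntegral_eq_zero_iff_of_nonneg_ae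
    ((ae_restrict_mem hmeas).mono fun ζ hζ => hnonneg ζ hζ) hintd] at hzero
  have hnull : μ {ζ | ζ ∈ capCap n θ ∧ 0 < ⟪a, ζ⟫} = 0 := by
    rw [Filter.EventuallyEq, ae_restrict_iff' hmeas] at hzero
    refine measure_mono_null (fun ζ hζ => ?_) hzero
    intro hcon
    have h1 := hlt ζ hζ.1 hζ.2
    have h2 := hcon hζ.1
    have h3 := mul_pos (sub_pos.mpr h1) hζ.2
    simp only [Pi.zero_apply] at h2
    linarith
  exact (hausdorffMeasure_halfCap_pos hθ he).ne' hnull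

end IsHomExt

end Orthogonality

section Estimates

variable {n : ℕ} {θ : ℝ}

lemma sphCap_nonempty : (sphCap n θ).Nonempty :=
  ⟨Etop n, norm_Etop, by simpa using cos_le_one θ⟩

lemma exists_bounds_on_capCap {φ : V n → ℝ} (hφc : ContinuousOn φ (capCap n θ))
    (hφpos : ∀ ζ ∈ capCap n θ, 0 < φ ζ) :
    ∃ m M, 0 < m ∧ 0 < M ∧ ∀ ζ ∈ capCap n θ, m ≤ φ ζ ∧ φ ζ ≤ M := by
  obtain ⟨u, hu⟩ := sphCap_nonempty (n := n) (θ := θ)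
  have hne : (capCap n θ).Nonempty := ⟨_, sub_smul_Etop_mem_capCap hu⟩
  obtain ⟨a, ha, hmin⟩ := isCompact_capCap.exists_isMinOn hne hφc
  obtain ⟨b, hb, hmax⟩ := isCompact_capCap.exists_isMaxOn hne hφc
  exact ⟨φ a, φ b, hφpos a ha, hφpos b hb, fun ζ hζ => ⟨hmin hζ, hmax hζ⟩⟩

namespace IsHomExt

variable {s G : V n → ℝ}

lemma exists_eq_mul_capPotential (h : IsHomExt n θ ⊤ s G) (hθ : θ ∈ Ioo 0 (π / 2)) {ζ : V n}
    (hζ : ζ ∈ capCap n θ) :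
    ∃ l z, 1 ≤ l ∧ l ≤ (cos θ)⁻¹ ∧ ‖z‖ ≤ sin θ ∧ s ζ = l * capPotential n θ G z ∧
      ∀ w, ⟪ζ, horizEmb n w⟫ = l * ⟪w, z⟫ := by
  obtain ⟨l, z, hl1, hl2, hz, hlz⟩ := exists_eq_smul_slicePt hθ (add_smul_Etop_mem_sphCap hζ)
  refine ⟨l, z, hl1, hl2, hz, ?_, fun w => ?_⟩
  · rw [← h.2.2 ζ hζ, hlz, h.map_smul (slicePt_mem_coneCap hθ hz) (one_pos.trans_le hl1),
      capPotential]
  · have h1 : ⟪horizEmb n w, ζ + cos θ • Etop n⟫ = l * ⟪w, z⟫ := by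
      rw [hlz, inner_smul_right, slicePt, inner_add_right, inner_smul_right,
        inner_horizEmb_Etop, LinearIsometry.inner_map_map, mul_zero, add_zero]
    rwa [inner_add_right, inner_smul_right, inner_horizEmb_Etop, mul_zero, add_zero,
      real_inner_comm] at h1

end IsHomExt

lemma exists_capPotential_bound {k : ℕ} (hθ : θ ∈ Ioo 0 (π / 2)) (hk : 1 ≤ k) (hkn : k ≤ n)
    {m M : ℝ} (hm : 0 < m) (hM : 0 < M) :
    ∃ C, 0 < C ∧ ∀ s G : V n → ℝ, IsHomExt n θ ⊤ s G → IsCapillaryF n θ G → TauPos n θ G →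
      (∀ i : Fin (n + 1), i ≠ Fin.last n → ∫ ζ in capCap n θ, s ζ * ζ i ∂μH[(n : ℝ)] = 0) →
      (∀ u ∈ sphCap n θ, m ≤ sigmaElem n k G u ∧ sigmaElem n k G u ≤ M) →
      ∀ z, ‖z‖ ≤ sin θ → 0 < capPotential n θ G z ∧ capPotential n θ G z ≤ C := by
  have hn : 0 < n := hk.trans hkn
  have hR := sin_pos_of_mem hθ
  have hc := cos_pos_of_mem hθ
  obtain ⟨r, rfl⟩ := Nat.exists_eq_add_of_le hkn
  obtain ⟨C, hC, hbound⟩ := IsRobinPotential.exists_upper_bound k r hk hR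
    (D := (cos θ)⁻¹ ^ k * M) (m := cos θ ^ 2 * m) (by positivity) (by positivity)
  refine ⟨C, hC, fun s G h hcap hτ horth hφ z hz => ?_⟩
  have := nontrivial_euclideanSpace hn
  have hf := h.isRobinPotential hθ hcap hτ
  have hsphere : ∀ w, ‖w‖ = sin θ → 0 < capPotential (k + r) θ G w := fun w hw =>
    h.capPotential_pos_of_sphere hn hθ hcap hτ horth hw
  refine ⟨hf.pos_of_sphere_pos hsphere hz, hbound _ hf hsphere
    (fun v hv z hz => h.abs_gram_det_le hθ hτ.1 hkn (fun u hu => (hφ u hu).2) hv hz)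
    (fun ε hε z hz => ?_) z hz⟩
  have h1 := h.le_det_hessianMatrix_add hθ hτ.1 hkn hm.le (fun u hu => (hφ u hu).1) hε hz
  rwa [Nat.add_sub_cancel_left] at h1

end Estimates

/-- `C⁰` estimates for solutions of the capillary `σ_k` problem. -/
theorem capillary_C0_estimate (n k : ℕ) (hn : 1 ≤ n) (θ : ℝ) (hθ : θ ∈ Ioo 0 (π / 2))
    (hk : 1 ≤ k) (hkn : k ≤ n)
    (φ : V n → ℝ) (hφc : ContinuousOn φ (capCap n θ))
    (hφpos : ∀ ζ ∈ capCap n θ, 0 < φ ζ) :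
    (∃ C : ℝ, 0 < C ∧
      ∀ s G : V n → ℝ, IsHomExt n θ ⊤ s G → IsCapillaryF n θ G → TauPos n θ G →
        (∀ i : Fin (n + 1), i ≠ Fin.last n →
          ∫ ζ in capCap n θ, s ζ * ζ i ∂μH[(n : ℝ)] = 0) →
        (∀ ζ ∈ capCap n θ, sigmaElem n k G (ζ + Real.cos θ • Etop n) = φ ζ) →
        ∀ ζ ∈ capCap n θ, 0 < s ζ ∧ s ζ ≤ C) ∧
    (k = n → ∃ c C' : ℝ, 0 < c ∧ 0 < C' ∧
      ∀ s G : V n → ℝ, IsHomExt n θ ⊤ s G → IsCapillaryF n θ G → TauPos n θ G →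
        (∀ i : Fin (n + 1), i ≠ Fin.last n →
          ∫ ζ in capCap n θ, s ζ * ζ i ∂μH[(n : ℝ)] = 0) →
        (∀ ζ ∈ capCap n θ, sigmaElem n k G (ζ + Real.cos θ • Etop n) = φ ζ) →
        ∃ w : V n, w (Fin.last n) = 0 ∧
          ∀ ζ ∈ capCap n θ, c ≤ s ζ - ⟪ζ, w⟫ ∧ s ζ - ⟪ζ, w⟫ ≤ C') := by
  have hR := sin_pos_of_mem hθ
  have hc := cos_pos_of_mem hθ
  obtain ⟨m, M, hm, hM, hφ⟩ := exists_bounds_on_capCap hφc hφpos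
  obtain ⟨C, hC, hbound⟩ := exists_capPotential_bound hθ hk hkn hm hM
  have hsigma : ∀ G : V n → ℝ,
      (∀ ζ ∈ capCap n θ, sigmaElem n k G (ζ + cos θ • Etop n) = φ ζ) →
      ∀ u ∈ sphCap n θ, m ≤ sigmaElem n k G u ∧ sigmaElem n k G u ≤ M := fun G hG u hu => by
    have h1 := hG _ (sub_smul_Etop_mem_capCap hu)
    rw [sub_add_cancel] at h1
    rw [h1]
    exact hφ _ (sub_smul_Etop_mem_capCap hu)
  refine ⟨⟨(cos θ)⁻¹ * C, by positivity, fun s G h hcap hτ horth hG ζ hζ => ?_⟩, ?_⟩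
  · obtain ⟨l, z, hl1, hl2, hz, hs, -⟩ := h.exists_eq_mul_capPotential hθ hζ
    obtain ⟨hpos, hle⟩ := hbound s G h hcap hτ horth (hsigma G hG) z hz
    rw [hs]
    exact ⟨mul_pos (one_pos.trans_le hl1) hpos, mul_le_mul hl2 hle hpos.le (by positivity)⟩
  · rintro rfl
    obtain ⟨c, hc0, hlower⟩ := IsRobinPotential.exists_lower_bound (n := k) (R := sin θ) (C := C)
      (lo := cos θ ^ 2 * m) hn hR hC (by positivity)
    refine ⟨c, (cos θ)⁻¹ * (C + C), hc0, by positivity, fun s G h hcap hτ horth hG => ?_⟩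
    have hb := hbound s G h hcap hτ horth (hsigma G hG)
    obtain ⟨w, hw, hlow⟩ := hlower _ (h.isRobinPotential hθ hcap hτ) (fun z hz => (hb z hz).2)
      fun z hz => h.le_det_hessianMatrix hθ hτ.1 hm.le (fun u hu => (hsigma G hG u hu).1) hz
    refine ⟨horizEmb k w, horizEmb_last w, fun ζ hζ => ?_⟩
    obtain ⟨l, z, hl1, hl2, hz, hs, hin⟩ := h.exists_eq_mul_capPotential hθ hζ
    have h1 := hlow z hz
    have h2 : -⟪w, z⟫ ≤ C := calc
      -⟪w, z⟫ ≤ ‖w‖ * ‖z‖ := (neg_le_abs _).trans (abs_real_inner_le_norm w z)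
      _ ≤ C / sin θ * sin θ := by gcongr
      _ = C := div_mul_cancel₀ C hR.ne'
    rw [hs, hin, ← mul_sub]
    refine ⟨h1.trans (le_mul_of_one_le_left (hc0.le.trans h1) hl1), ?_⟩
    exact mul_le_mul hl2 (by linarith [(hb z hz).2]) (hc0.le.trans h1) (by positivity)
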